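/- arXiv:2105.12199 — 2 statements merged into one kernel-verified Lean document; each statement's English description precedes it below -/
import Mathlib

section
/- Let B be a closed hereditary *-subalgebra of a C*-algebra A, let f, g be positive functionals on B, and let f̃ (respectively g̃) denote the unique norm-preserving positive extension of f (respectively g) to A. Then: (1) f ≤ g if and only if f̃ ≤ g̃; (2) f is absolutely continuous with respect to g if and only if f̃ is absolutely continuous with respect to g̃. -/
open scoped ComplexOrder

section CStarContinuousDefs

variable {A : Type} [NonUnitalCStarAlgebra A]

/-- A (continuous) linear functional on a C⋆-algebra is positive if `0 ≤ f (a⋆ * a)` for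
every `a`. -/
def IsPosFnL (f : A →L[ℂ] ℂ) : Prop := ∀ a : A, 0 ≤ f (star a * a)

/-- Order on positive functionals: `f ≤ g` iff `g - f` is positive. -/
def FnLEL (f g : A →L[ℂ] ℂ) : Prop := IsPosFnL (g - f)

/-- Absolute continuity `f ≪ g`: `f` is the pointwise limit of an increasing sequence of
positive functionals `fₙ` with `fₙ ≤ αₙ • g` for some positive reals `αₙ`. -/
def AbsContL (f g : A →L[ℂ] ℂ) : Prop :=
  ∃ (fn : ℕ → (A →L[ℂ] ℂ)) (α : ℕ → ℝ),
    (∀ n, IsPosFnL (fn n)) ∧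
    (∀ n, 0 < α n) ∧
    (∀ n, FnLEL (fn n) (fn (n + 1))) ∧
    (∀ n, FnLEL (fn n) (((α n : ℂ)) • g)) ∧
    (∀ a : A, Filter.Tendsto (fun n => fn n a) Filter.atTop (nhds (f a)))

variable (B : NonUnitalStarSubalgebra ℂ A) [IsClosed (B : Set A)]

/-- `ft` is a norm-preserving positive extension to `A` of the positive functional `f`
defined on the closed `⋆`-subalgebra `B`. -/
def IsNormPresExt (f : ↥B →L[ℂ] ℂ) (ft : A →L[ℂ] ℂ) : Prop :=
  IsPosFnL ft ∧ (∀ b : ↥B, ft ↑b = f b) ∧ ‖ft‖ = ‖f‖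

end CStarContinuousDefs

/-! The extension `f̃` can be recovered from `f`: if `e` runs along an approximate unit of `B`, then
`f e → ‖f‖ = ‖f̃‖`, and Cauchy–Schwarz turns this into `h (e a e) → h a`, uniformly over all
positive `h ≤ f̃`. For `h = f̃` this reads `f (e a e) → f̃ a`, so inequalities between positive
functionals on `B` pass to the extensions. The compressions `a ↦ f (e a e)` also have a weak-⋆
cluster point, which is a norm-preserving extension of `f`, and the uniformity lets the limit along
the approximate unit be interchanged with the limit of an increasing sequence `fₙ → f`. -/

open Filter Topology

section StarOrder

lemma norm_star_mul_mul_le {A : Type*} [NonUnitalSeminormedRing A] [StarRing A]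
    [NormedStarGroup A] (e a : A) :
    ‖star e * a * e‖ ≤ ‖e‖ ^ 2 * ‖a‖ :=
  calc ‖star e * a * e‖ ≤ ‖star e‖ * ‖a‖ * ‖e‖ := norm_mul₃_le
    _ = ‖e‖ ^ 2 * ‖a‖ := by rw [norm_star]; ring

variable {A : Type*} [NonUnitalCStarAlgebra A] [PartialOrder A] [StarOrderedRing A]

lemma mul_self_le_self_of_norm_le_one {e : A} (he : 0 ≤ e) (he₁ : ‖e‖ ≤ 1) : e * e ≤ e := by
  obtain ⟨c, hc⟩ := CStarAlgebra.nonneg_iff_eq_star_mul_self.mp he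
  calc e * e = star c * (c * star c) * c := by rw [hc]; noncomm_ring
    _ ≤ ‖c * star c‖ • (star c * c) := CStarAlgebra.star_left_conjugate_le_norm_smul
    _ = ‖e‖ • e := by rw [CStarRing.norm_self_mul_star, hc, CStarRing.norm_star_mul_self]
    _ ≤ e := smul_le_of_le_one_left he he₁

instance instStarOrderedRingOfIsClosed (B : NonUnitalStarSubalgebra ℂ A) [IsClosed (B : Set A)] :
    StarOrderedRing B :=
  .of_nonneg_iff' (fun {_ _} h z => add_le_add_right (α := A) h z) fun x => by
    refine ⟨fun hx => ?_, ?_⟩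
    · have hx : 0 ≤ (x : A) := hx
      have hmem : CFC.sqrt (x : A) ∈ B := by
        rw [CFC.sqrt_eq_real_sqrt _ hx]
        exact cfcₙ_mem (𝕜' := ℂ) _ x.2
      refine ⟨⟨_, hmem⟩, Subtype.ext ?_⟩
      change (x : A) = star (CFC.sqrt (x : A)) * CFC.sqrt (x : A)
      rw [(IsSelfAdjoint.of_nonneg (CFC.sqrt_nonneg _)).star_eq, CFC.sqrt_mul_sqrt_self _ hx]
    · rintro ⟨s, rfl⟩
      exact star_mul_self_nonneg (s : A)

/-- A `⋆`-subalgebra is hereditary if it contains every positive element dominated by one of its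
elements. -/
def IsHereditary (B : NonUnitalStarSubalgebra ℂ A) : Prop :=
  ∀ a : A, ∀ b ∈ B, 0 ≤ a → a ≤ b → a ∈ B

lemma IsHereditary.star_mul_mul_mem {B : NonUnitalStarSubalgebra ℂ A} (hB : IsHereditary B)
    {e : A} (he : e ∈ B) (a : A) : star e * a * e ∈ B := by
  have ha : a ∈ Submodule.span ℂ {x : A | 0 ≤ x} := by
    rw [CStarAlgebra.span_nonneg]
    trivial
  induction ha using Submodule.span_induction with
  | mem x hx =>
    have hmem : (‖x‖ : ℂ) • (star e * e) ∈ B :=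
      SMulMemClass.smul_mem _ (mul_mem (star_mem he) he)
    rw [Complex.coe_smul] at hmem
    exact hB _ _ hmem (star_left_conjugate_nonneg hx e)
      (CStarAlgebra.star_left_conjugate_le_norm_smul (IsSelfAdjoint.of_nonneg hx))
  | zero => simp
  | add x y _ _ hx hy => rw [mul_add, add_mul]; exact add_mem hx hy
  | smul c x _ hx => rw [mul_smul_comm, smul_mul_assoc]; exact SMulMemClass.smul_mem _ hx

/-- The compression `a ↦ e⋆ a e` by an element `e` of a hereditary subalgebra `B`, as a map from
the ambient algebra into `B`. -/
noncomputable def compression {B : NonUnitalStarSubalgebra ℂ A} (hB : IsHereditary B) (e : B) :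
    A →L[ℂ] B :=
  LinearMap.mkContinuous
    { toFun a := ⟨star (e : A) * a * e, hB.star_mul_mul_mem e.2 a⟩
      map_add' a b := Subtype.ext (by simp [mul_add, add_mul])
      map_smul' c a := Subtype.ext (by simp [mul_smul_comm, smul_mul_assoc]) }
    (‖(e : A)‖ ^ 2) (norm_star_mul_mul_le (e : A))

lemma tendsto_star_mul_mul {l : Filter A} (hl : l.IsIncreasingApproximateUnit) (b : A) :
    Tendsto (fun e => star e * b * e) l (𝓝 b) := by
  rw [tendsto_iff_norm_sub_tendsto_zero]
  have hsum : Tendsto (fun e => ‖e * b - b‖ + ‖b * e - b‖) l (𝓝 0) := by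
    simpa using (tendsto_iff_norm_sub_tendsto_zero.mp (hl.tendsto_mul_right b)).add
      (tendsto_iff_norm_sub_tendsto_zero.mp (hl.tendsto_mul_left b))
  refine squeeze_zero' (.of_forall fun _ => norm_nonneg _) ?_ hsum
  filter_upwards [hl.eventually_star_eq, hl.eventually_norm] with e he he₁
  calc ‖star e * b * e - b‖ = ‖(e * b - b) * e + (b * e - b)‖ := by rw [he]; noncomm_ring
    _ ≤ ‖e * b - b‖ * ‖e‖ + ‖b * e - b‖ :=
      (norm_add_le _ _).trans (add_le_add_left (norm_mul_le _ _) _)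
    _ ≤ ‖e * b - b‖ + ‖b * e - b‖ := by
      gcongr
      exact mul_le_of_le_one_right (norm_nonneg _) he₁

end StarOrder

section PositiveFunctionals

variable {A : Type} [NonUnitalCStarAlgebra A] {f g h F : A →L[ℂ] ℂ}

lemma fnLEL_iff : FnLEL f g ↔ ∀ a, f (star a * a) ≤ g (star a * a) := by
  simp [FnLEL, IsPosFnL]

lemma IsPosFnL.smul (hf : IsPosFnL f) {r : ℝ} (hr : 0 ≤ r) : IsPosFnL ((r : ℂ) • f) :=
  fun a => mul_nonneg (Complex.zero_le_real.mpr hr) (hf a)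

lemma isClosed_isPosFnL :
    IsClosed {φ : WeakDual ℂ A | IsPosFnL (WeakDual.toStrongDual φ)} := by
  simp only [IsPosFnL, Set.ofPred_forall]
  exact isClosed_iInter fun a => isClosed_le continuous_const (WeakDual.eval_continuous _)

lemma re_apply_star_mul_self_le (f : A →L[ℂ] ℂ) (a : A) :
    (f (star a * a)).re ≤ ‖f‖ * ‖a‖ ^ 2 :=
  calc (f (star a * a)).re ≤ ‖f (star a * a)‖ := Complex.re_le_norm _
    _ ≤ ‖f‖ * ‖star a * a‖ := f.le_opNorm _
    _ = ‖f‖ * ‖a‖ ^ 2 := by rw [CStarRing.norm_star_mul_self, sq]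

lemma fnLEL_of_tendsto_of_le_succ {fn : ℕ → A →L[ℂ] ℂ} (hmono : ∀ n, FnLEL (fn n) (fn (n + 1)))
    (hlim : ∀ a, Tendsto (fun n => fn n a) atTop (𝓝 (f a))) (n : ℕ) : FnLEL (fn n) f :=
  fnLEL_iff.mpr fun a =>
    (monotone_nat_of_le_succ fun k => fnLEL_iff.mp (hmono k) a).ge_of_tendsto (hlim _) n

variable [PartialOrder A] [StarOrderedRing A]

lemma IsPosFnL.apply_nonneg (hf : IsPosFnL f) {a : A} (ha : 0 ≤ a) : 0 ≤ f a := by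
  obtain ⟨c, rfl⟩ := CStarAlgebra.nonneg_iff_eq_star_mul_self.mp ha
  exact hf c

/-- A positive functional in the sense of `IsPosFnL`, as an element of Mathlib's type of positive
linear maps. -/
def IsPosFnL.toPositiveLinearMap (hf : IsPosFnL f) : A →ₚ[ℂ] ℂ :=
  .mk₀ (f : A →ₗ[ℂ] ℂ) fun _ => hf.apply_nonneg

lemma IsPosFnL.map_star (hf : IsPosFnL f) (a : A) : f (star a) = star (f a) :=
  StarHomClass.map_star hf.toPositiveLinearMap a

lemma IsPosFnL.norm_apply_star_mul_sq_le (hf : IsPosFnL f) (a b : A) :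
    ‖f (star a * b)‖ ^ 2 ≤ (f (star a * a)).re * (f (star b * b)).re := by
  let p := hf.toPositiveLinearMap
  have hcs : ‖f (star a * b)‖ ≤ √(f (star a * a)).re * √(f (star b * b)).re :=
    norm_inner_le_norm (𝕜 := ℂ) (p.toPreGNS a) (p.toPreGNS b)
  calc ‖f (star a * b)‖ ^ 2 ≤ (√(f (star a * a)).re * √(f (star b * b)).re) ^ 2 := by gcongr
    _ = _ := by rw [mul_pow, Real.sq_sqrt (hf a).1, Real.sq_sqrt (hf b).1]

lemma IsPosFnL.tendsto_re_apply (hf : IsPosFnL f) {l : Filter A}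
    (hl : l.IsIncreasingApproximateUnit) : Tendsto (fun e => (f e).re) l (𝓝 ‖f‖) := by
  have hnonneg : ∀ᶠ e in l, 0 ≤ (f e).re :=
    hl.eventually_nonneg.mono fun e he => (hf.apply_nonneg he).1
  refine tendsto_order.mpr ⟨fun r hr => ?_, fun r hr => ?_⟩
  · obtain hr₀ | hr₀ := lt_or_ge r 0
    · exact hnonneg.mono fun e he => hr₀.trans_le he
    have hf₀ : 0 < ‖f‖ := hr₀.trans_lt hr
    obtain ⟨x, hx₁, hx⟩ := f.exists_lt_apply_of_lt_opNorm
      ((Real.sqrt_lt' hf₀).mpr (by nlinarith : r * ‖f‖ < ‖f‖ ^ 2))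
    have hlim : Tendsto (fun e => ‖f (e * x)‖) l (𝓝 ‖f x‖) :=
      ((f.continuous.tendsto _).comp (hl.tendsto_mul_right x)).norm
    filter_upwards [hlim.eventually_const_lt hx, hnonneg, hl.eventually_nonneg,
      hl.eventually_star_eq, hl.eventually_norm] with e hex hfe he hsa he₁
    refine lt_of_mul_lt_mul_right ?_ hf₀.le
    calc r * ‖f‖ < ‖f (star e * x)‖ ^ 2 := by
          rw [hsa]
          exact (Real.sqrt_lt' ((Real.sqrt_nonneg _).trans_lt hex)).mp hex
      _ ≤ (f (star e * e)).re * (f (star x * x)).re := hf.norm_apply_star_mul_sq_le e x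
      _ ≤ (f e).re * ‖f‖ := by
        have hee : 0 ≤ (f (e - e * e)).re :=
          (hf.apply_nonneg (sub_nonneg.mpr (mul_self_le_self_of_norm_le_one he he₁))).1
        rw [map_sub, Complex.sub_re, sub_nonneg] at hee
        rw [hsa]
        gcongr
        · exact (hf x).1
        exact (re_apply_star_mul_self_le f x).trans
          (mul_le_of_le_one_right hf₀.le (pow_le_one₀ (norm_nonneg _) hx₁.le))
  · filter_upwards [hl.eventually_norm] with e he₁
    exact ((Complex.re_le_norm _).trans (f.unit_le_opNorm e he₁)).trans_lt hr

-- The estimate compares `a * e` with `a * u` as `u` runs along an approximate unit of `A`, for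
-- which `h ((u - e)²)` stays below `F ((u - e)²) ≤ 2 ‖F‖ - Re F (u * e + e * u)`.
lemma FnLEL.norm_apply_sub_mul_sq_le (hhF : FnLEL h F) (hh : IsPosFnL h) {e : A}
    (he : IsSelfAdjoint e) (he₁ : ‖e‖ ≤ 1) (a : A) :
    ‖h (a - a * e)‖ ^ 2 ≤ ‖F‖ * ‖a‖ ^ 2 * (2 * ‖F‖ - 2 * (F e).re) := by
  have hl := CStarAlgebra.increasingApproximateUnit A
  have hle (x : A) : (h (star x * x)).re ≤ (F (star x * x)).re := (fnLEL_iff.mp hhF x).1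
  have hF (x : A) (hx : ‖x‖ ≤ 1) : (F (star x * x)).re ≤ ‖F‖ :=
    (re_apply_star_mul_self_le F x).trans
      (mul_le_of_le_one_right (norm_nonneg _) (pow_le_one₀ (norm_nonneg _) hx))
  have hlim₁ : Tendsto (fun u => ‖h (a * u - a * e)‖ ^ 2) (CStarAlgebra.approximateUnit A)
      (𝓝 (‖h (a - a * e)‖ ^ 2)) :=
    (((h.continuous.tendsto _).comp ((hl.tendsto_mul_left a).sub_const _)).norm).pow 2
  have hlim₂ : Tendsto (fun u => ‖F‖ * ‖a‖ ^ 2 * (2 * ‖F‖ - ((F (u * e)).re + (F (e * u)).re)))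
      (CStarAlgebra.approximateUnit A) (𝓝 (‖F‖ * ‖a‖ ^ 2 * (2 * ‖F‖ - 2 * (F e).re))) := by
    have hre : Continuous fun x => (F x).re := Complex.continuous_re.comp F.continuous
    rw [two_mul (F e).re]
    exact ((((hre.tendsto _).comp (hl.tendsto_mul_right e)).add
      ((hre.tendsto _).comp (hl.tendsto_mul_left e))).const_sub _).const_mul _
  refine le_of_tendsto_of_tendsto hlim₁ hlim₂ ?_
  filter_upwards [hl.eventually_star_eq, hl.eventually_norm] with u hu hu₁
  calc ‖h (a * u - a * e)‖ ^ 2 = ‖h (star (star a) * (u - e))‖ ^ 2 := by rw [star_star, mul_sub]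
    _ ≤ (h (star (star a) * star a)).re * (h (star (u - e) * (u - e))).re :=
      hh.norm_apply_star_mul_sq_le _ _
    _ ≤ (‖F‖ * ‖star a‖ ^ 2) * (F (star (u - e) * (u - e))).re :=
      mul_le_mul ((hle _).trans (re_apply_star_mul_self_le F _)) (hle _) (hh _).1 (by positivity)
    _ ≤ ‖F‖ * ‖a‖ ^ 2 * (2 * ‖F‖ - ((F (u * e)).re + (F (e * u)).re)) := by
      have hexp : star (u - e) * (u - e) = star u * u + star e * e - (u * e + e * u) := by
        rw [star_sub, hu, he.star_eq]
        noncomm_ring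
      rw [norm_star, hexp, map_sub, map_add, map_add]
      simp only [Complex.sub_re, Complex.add_re]
      gcongr
      linarith [hF u hu₁, hF e he₁]

lemma FnLEL.norm_apply_sub_star_mul_mul_le (hhF : FnLEL h F) (hh : IsPosFnL h) {e : A}
    (he : IsSelfAdjoint e) (he₁ : ‖e‖ ≤ 1) (a : A) :
    ‖h a - h (star e * a * e)‖ ≤ 2 * √(‖F‖ * ‖a‖ ^ 2 * (2 * ‖F‖ - 2 * (F e).re)) := by
  have hF : 0 ≤ 2 * ‖F‖ - 2 * (F e).re := by
    linarith [(Complex.re_le_norm _).trans (F.unit_le_opNorm e he₁)]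
  have hle (x : A) (hx : ‖x‖ ≤ ‖a‖) :
      ‖h (x - x * e)‖ ≤ √(‖F‖ * ‖a‖ ^ 2 * (2 * ‖F‖ - 2 * (F e).re)) :=
    Real.le_sqrt_of_sq_le ((hhF.norm_apply_sub_mul_sq_le hh he he₁ x).trans (by gcongr))
  have hae : ‖star (a * e)‖ ≤ ‖a‖ := by
    rw [norm_star]
    exact (norm_mul_le _ _).trans (mul_le_of_le_one_right (norm_nonneg _) he₁)
  have hsplit : a - star e * a * e =
      (a - a * e) + star (star (a * e) - star (a * e) * e) := by
    simp only [star_sub, star_mul, star_star]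
    noncomm_ring
  calc ‖h a - h (star e * a * e)‖
      ≤ ‖h (a - a * e)‖ + ‖h (star (a * e) - star (a * e) * e)‖ := by
        rw [← map_sub, hsplit, map_add, hh.map_star, ← norm_star (h (star (a * e) - _))]
        exact norm_add_le _ _
    _ ≤ 2 * √(‖F‖ * ‖a‖ ^ 2 * (2 * ‖F‖ - 2 * (F e).re)) := by
        rw [two_mul]
        exact add_le_add (hle a le_rfl) (hle _ hae)

lemma tendstoUniformlyOn_apply_star_mul_mul {ι : Type*} {l : Filter ι} {e : ι → A}
    (he : ∀ᶠ i in l, IsSelfAdjoint (e i)) (he₁ : ∀ᶠ i in l, ‖e i‖ ≤ 1)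
    (hF : Tendsto (fun i => (F (e i)).re) l (𝓝 ‖F‖)) (a : A) :
    TendstoUniformlyOn (fun i (h : A →L[ℂ] ℂ) => h (star (e i) * a * e i)) (fun h => h a) l
      {h | IsPosFnL h ∧ FnLEL h F} := by
  have hlim : Tendsto (fun i => 2 * √(‖F‖ * ‖a‖ ^ 2 * (2 * ‖F‖ - 2 * (F (e i)).re))) l (𝓝 0) := by
    simpa using ((((hF.const_mul 2).const_sub (2 * ‖F‖)).const_mul _).sqrt).const_mul 2
  refine Metric.tendstoUniformlyOn_iff.mpr fun ε hε => ?_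
  filter_upwards [he, he₁, hlim.eventually_lt_const hε] with i hi hi₁ hiε h ⟨hh, hhF⟩
  rw [dist_eq_norm]
  exact (hhF.norm_apply_sub_star_mul_mul_le hh hi hi₁ a).trans_lt hiε

end PositiveFunctionals

section Restriction

variable {A : Type} [NonUnitalCStarAlgebra A] (B : NonUnitalStarSubalgebra ℂ A)
  [IsClosed (B : Set A)] {F G : A →L[ℂ] ℂ} {f g : B →L[ℂ] ℂ}

/-- The restriction of a functional on `A` to the subalgebra `B`. -/
noncomputable def restrictFnL (F : A →L[ℂ] ℂ) : B →L[ℂ] ℂ :=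
  F.domRestrict B.toSubmodule

variable {B}

lemma IsNormPresExt.restrictFnL_eq (hF : IsNormPresExt B f F) : restrictFnL B F = f :=
  ContinuousLinearMap.ext hF.2.1

protected lemma IsPosFnL.restrictFnL (hF : IsPosFnL F) : IsPosFnL (restrictFnL B F) :=
  fun b => hF b

protected lemma FnLEL.restrictFnL (h : FnLEL F G) : FnLEL (restrictFnL B F) (restrictFnL B G) :=
  IsPosFnL.restrictFnL (F := G - F) h

protected lemma AbsContL.restrictFnL (h : AbsContL F G) :
    AbsContL (restrictFnL B F) (restrictFnL B G) := by
  obtain ⟨Fn, α, hpos, hα, hmono, hle, hlim⟩ := h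
  exact ⟨fun n => restrictFnL B (Fn n), α, fun n => (hpos n).restrictFnL, hα,
    fun n => (hmono n).restrictFnL, fun n => (hle n).restrictFnL, fun b => hlim b⟩

lemma IsNormPresExt.isPosFnL (hF : IsNormPresExt B f F) : IsPosFnL f :=
  hF.restrictFnL_eq ▸ hF.1.restrictFnL

lemma IsNormPresExt.smul (hF : IsNormPresExt B f F) {r : ℝ} (hr : 0 ≤ r) :
    IsNormPresExt B ((r : ℂ) • f) ((r : ℂ) • F) :=
  ⟨hF.1.smul hr, fun b => congrArg (fun z => (r : ℂ) • z) (hF.2.1 b),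
    by rw [norm_smul, norm_smul, hF.2.2]⟩

end Restriction

section Extension

variable {A : Type} [NonUnitalCStarAlgebra A] [PartialOrder A] [StarOrderedRing A]
  {B : NonUnitalStarSubalgebra ℂ A} [IsClosed (B : Set A)] {f g : B →L[ℂ] ℂ} {F G : A →L[ℂ] ℂ}
  {l : Filter B}

lemma IsPosFnL.comp_compression (hf : IsPosFnL f) (hB : IsHereditary B) (e : B) :
    IsPosFnL (f.comp (compression hB e)) :=
  fun a => hf.apply_nonneg (star_left_conjugate_nonneg (star_mul_self_nonneg a) (e : A))

lemma norm_comp_compression_le (f : B →L[ℂ] ℂ) (hB : IsHereditary B) {e : B} (he : ‖e‖ ≤ 1) :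
    ‖f.comp (compression hB e)‖ ≤ ‖f‖ :=
  calc ‖f.comp (compression hB e)‖ ≤ ‖f‖ * ‖compression hB e‖ := f.opNorm_comp_le _
    _ ≤ ‖f‖ * 1 := by
      gcongr
      exact (LinearMap.mkContinuous_norm_le _ (by positivity) _).trans
        (pow_le_one₀ (norm_nonneg _) he)
    _ = ‖f‖ := mul_one _

lemma tendsto_apply_compression_coe (f : B →L[ℂ] ℂ) (hB : IsHereditary B)
    (hl : l.IsIncreasingApproximateUnit) (b : B) :
    Tendsto (fun e => f (compression hB e b)) l (𝓝 (f b)) :=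
  (f.continuous.tendsto b).comp (tendsto_star_mul_mul hl b)

lemma IsPosFnL.exists_isNormPresExt (hf : IsPosFnL f) (hB : IsHereditary B) :
    ∃ F, IsNormPresExt B f F := by
  have hl := CStarAlgebra.increasingApproximateUnit B
  let φ (e : B) : WeakDual ℂ A := StrongDual.toWeakDual (f.comp (compression hB e))
  obtain ⟨F, hF, hclus⟩ := (WeakDual.isCompact_closedBall (0 : StrongDual ℂ A)
    ‖f‖).exists_mapClusterPt_of_frequently (l := CStarAlgebra.approximateUnit B) (f := φ)
    (hl.eventually_norm.mono fun e he => by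
      simpa [φ] using norm_comp_compression_le f hB he).frequently
  have hext (b : B) : F b = f b := by
    have hb := hclus.continuousAt_comp (WeakDual.eval_continuous (b : A)).continuousAt
    exact eq_of_nhds_neBot
      (hb.neBot.mono (inf_le_inf_left _ (tendsto_apply_compression_coe f hB hl b)))
  have hpos : IsPosFnL (WeakDual.toStrongDual F) :=
    isClosed_isPosFnL.mem_of_mapClusterPt hclus (.of_forall fun e => hf.comp_compression hB e)
  refine ⟨WeakDual.toStrongDual F, hpos, hext, le_antisymm ?_ ?_⟩
  · simpa using hF
  · exact f.opNorm_le_bound (norm_nonneg _) fun b =>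
      hext b ▸ (WeakDual.toStrongDual F).le_opNorm (b : A)

lemma IsNormPresExt.tendstoUniformlyOn (hF : IsNormPresExt B f F)
    (hl : l.IsIncreasingApproximateUnit) (a : A) :
    TendstoUniformlyOn (fun (e : B) (h : A →L[ℂ] ℂ) => h (star (e : A) * a * e)) (fun h => h a) l
      {h | IsPosFnL h ∧ FnLEL h F} := by
  refine tendstoUniformlyOn_apply_star_mul_mul
    (hl.eventually_isSelfAdjoint.mono fun e he => congrArg Subtype.val he) hl.eventually_norm ?_ a
  simpa only [hF.2.1, hF.2.2] using hF.isPosFnL.tendsto_re_apply hl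

lemma IsNormPresExt.tendsto_apply_compression (hF : IsNormPresExt B f F) (hB : IsHereditary B)
    (hl : l.IsIncreasingApproximateUnit) (a : A) :
    Tendsto (fun e => f (compression hB e a)) l (𝓝 (F a)) :=
  ((hF.tendstoUniformlyOn hl a).tendsto_at
    ⟨hF.1, fnLEL_iff.mpr fun _ => le_rfl⟩).congr fun e => hF.2.1 (compression hB e a)

lemma IsNormPresExt.fnLEL (hF : IsNormPresExt B f F) (hG : IsNormPresExt B g G)
    (hB : IsHereditary B) (h : FnLEL f g) : FnLEL F G := by
  have hl := CStarAlgebra.increasingApproximateUnit B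
  refine fnLEL_iff.mpr fun a => le_of_tendsto_of_tendsto'
    (hF.tendsto_apply_compression hB hl (star a * a))
    (hG.tendsto_apply_compression hB hl (star a * a)) fun e => ?_
  exact sub_nonneg.mp (IsPosFnL.comp_compression h hB e a)

lemma IsNormPresExt.tendsto_apply (hF : IsNormPresExt B f F) (hB : IsHereditary B)
    {ι : Type*} {l : Filter ι} {fn : ι → B →L[ℂ] ℂ} {Fn : ι → A →L[ℂ] ℂ}
    (hFn : ∀ i, IsNormPresExt B (fn i) (Fn i)) (hle : ∀ i, FnLEL (Fn i) F)
    (hlim : ∀ b, Tendsto (fun i => fn i b) l (𝓝 (f b))) (a : A) :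
    Tendsto (fun i => Fn i a) l (𝓝 (F a)) := by
  have hl := CStarAlgebra.increasingApproximateUnit B
  have hunif : TendstoUniformly (fun (e : B) i => Fn i (star (e : A) * a * e)) (fun i => Fn i a)
      (CStarAlgebra.approximateUnit B) :=
    tendstoUniformlyOn_univ.mp
      (((hF.tendstoUniformlyOn hl a).comp Fn).mono fun i _ => ⟨(hFn i).1, hle i⟩)
  have hlim' (e : B) : Tendsto (fun i => Fn i (star (e : A) * a * e)) l
      (𝓝 (f (compression hB e a))) :=
    (hlim _).congr fun i => ((hFn i).2.1 (compression hB e a)).symm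
  exact hunif.tendsto_of_eventually_tendsto (.of_forall hlim')
    (hF.tendsto_apply_compression hB hl a)

lemma IsNormPresExt.absContL (hF : IsNormPresExt B f F) (hG : IsNormPresExt B g G)
    (hB : IsHereditary B) (h : AbsContL f g) : AbsContL F G := by
  obtain ⟨fn, α, hpos, hα, hmono, hle, hlim⟩ := h
  choose Fn hFn using fun n => (hpos n).exists_isNormPresExt hB
  have hFnF (n : ℕ) : FnLEL (Fn n) F :=
    (hFn n).fnLEL hF hB (fnLEL_of_tendsto_of_le_succ hmono hlim n)
  exact ⟨Fn, α, fun n => (hFn n).1, hα, fun n => (hFn n).fnLEL (hFn (n + 1)) hB (hmono n),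
    fun n => (hFn n).fnLEL (hG.smul (hα n).le) hB (hle n), hF.tendsto_apply hB hFn hFnF hlim⟩

end Extension

/-- **Corollary 2.7**: let `B` be a closed hereditary `⋆`-subalgebra of a C⋆-algebra `A`,
`f, g` positive functionals on `B`, and `f̃, g̃` (the unique) norm-preserving positive
extensions of `f, g` to `A`. Then (1) `f ≤ g ↔ f̃ ≤ g̃`, and (2) `f ≪ g ↔ f̃ ≪ g̃`. -/
theorem hereditary_extension_le_and_absCont
    {A : Type} [NonUnitalCStarAlgebra A] [PartialOrder A] [StarOrderedRing A]
    (B : NonUnitalStarSubalgebra ℂ A) [IsClosed (B : Set A)]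
    (hered : ∀ a : A, ∀ b ∈ B, 0 ≤ a → a ≤ b → a ∈ B)
    (f g : ↥B →L[ℂ] ℂ) (hf : IsPosFnL f) (hg : IsPosFnL g)
    (ft gt : A →L[ℂ] ℂ)
    (hft : IsNormPresExt B f ft) (hgt : IsNormPresExt B g gt) :
    (FnLEL f g ↔ FnLEL ft gt) ∧ (AbsContL f g ↔ AbsContL ft gt) := by
  refine ⟨⟨hft.fnLEL hgt hered, fun h => ?_⟩, ⟨hft.absContL hgt hered, fun h => ?_⟩⟩
  · exact hft.restrictFnL_eq ▸ hgt.restrictFnL_eq ▸ h.restrictFnL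
  · exact hft.restrictFnL_eq ▸ hgt.restrictFnL_eq ▸ h.restrictFnL
end

section
/- Let M be a von Neumann algebra with a faithful normal positive functional 𝔤 on M. Then the following are equivalent: (i) M is finite; (ii) every normal positive functional on M is absolutely continuous with respect to 𝔤. -/
open scoped ComplexOrder

/-- Scalar multiples of elements of a von Neumann algebra stay in it. -/
instance {H : Type} [NormedAddCommGroup H] [InnerProductSpace ℂ H] [CompleteSpace H] :
    SMulMemClass (VonNeumannAlgebra H) ℂ (H →L[ℂ] H) where
  smul_mem {M} c _x hx := M.toStarSubalgebra.smul_mem hx c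

section VonNeumannDefs

variable {H : Type} [NormedAddCommGroup H] [InnerProductSpace ℂ H] [CompleteSpace H]
variable {M : VonNeumannAlgebra H}

/-- The Loewner order on bounded operators: `x ≤ y` iff `y - x` is a positive operator. -/
def OpLE (x y : H →L[ℂ] H) : Prop := (y - x).IsPositive

/-- A linear functional on a von Neumann algebra is positive if `0 ≤ 𝔣 (x⋆ * x)` for
every `x`. -/
def VNIsPos (𝔣 : ↥M →ₗ[ℂ] ℂ) : Prop := ∀ x : ↥M, 0 ≤ 𝔣 (star x * x)

/-- Order on positive functionals: `𝔣 ≤ 𝔤` iff `𝔤 - 𝔣` is positive. -/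
def VNLE (𝔣 𝔤 : ↥M →ₗ[ℂ] ℂ) : Prop := VNIsPos (𝔤 - 𝔣)

/-- A functional `𝔣` on a von Neumann algebra `M` is normal if for every norm-bounded
increasing net `x : ι → M` of positive elements of `M` having a least upper bound `xsup`
in `M` (with respect to the Loewner order), `𝔣 xsup` is the supremum of the `𝔣 (x i)`. -/
def VNIsNormal (𝔣 : ↥M →ₗ[ℂ] ℂ) : Prop :=
  ∀ (ι : Type) [Preorder ι] [IsDirected ι (· ≤ ·)] [Nonempty ι]
    (x : ι → ↥M) (xsup : ↥M),
    (∀ i, (x i : H →L[ℂ] H).IsPositive) →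
    (∀ i j, i ≤ j → OpLE (x i : H →L[ℂ] H) (x j : H →L[ℂ] H)) →
    (∃ C : ℝ, ∀ i, ‖(x i : H →L[ℂ] H)‖ ≤ C) →
    (∀ i, OpLE (x i : H →L[ℂ] H) (xsup : H →L[ℂ] H)) →
    (∀ y : ↥M, (∀ i, OpLE (x i : H →L[ℂ] H) (y : H →L[ℂ] H)) →
      OpLE (xsup : H →L[ℂ] H) (y : H →L[ℂ] H)) →
    IsLUB (Set.range fun i => 𝔣 (x i)) (𝔣 xsup)

/-- Absolute continuity `𝔣 ≪ 𝔤` for normal positive functionals: `𝔣` is the pointwise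
limit of an increasing sequence of normal positive functionals `𝔣ₙ` with `𝔣ₙ ≤ αₙ • 𝔤`
for some positive reals `αₙ`. -/
def VNAbsCont (𝔣 𝔤 : ↥M →ₗ[ℂ] ℂ) : Prop :=
  ∃ (fn : ℕ → (↥M →ₗ[ℂ] ℂ)) (α : ℕ → ℝ),
    (∀ n, VNIsPos (fn n) ∧ VNIsNormal (fn n)) ∧
    (∀ n, 0 < α n) ∧
    (∀ n, VNLE (fn n) (fn (n + 1))) ∧
    (∀ n, VNLE (fn n) (((α n : ℂ)) • 𝔤)) ∧
    (∀ x : ↥M, Filter.Tendsto (fun n => fn n x) Filter.atTop (nhds (𝔣 x)))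

/-- Singularity `𝔣 ⊥ 𝔤`: the only normal positive functional dominated by both `𝔣` and
`𝔤` is `0`. -/
def VNSingular (𝔣 𝔤 : ↥M →ₗ[ℂ] ℂ) : Prop :=
  ∀ p : ↥M →ₗ[ℂ] ℂ, VNIsPos p → VNIsNormal p → VNLE p 𝔣 → VNLE p 𝔤 → p = 0

/-- `𝔣 = 𝔣r + 𝔣s` is a Lebesgue decomposition of `𝔣` with respect to `𝔤` within the
normal positive functionals. -/
def VNIsLebDecomp (𝔣 𝔤 𝔣r 𝔣s : ↥M →ₗ[ℂ] ℂ) : Prop :=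
  VNIsPos 𝔣r ∧ VNIsNormal 𝔣r ∧ VNIsPos 𝔣s ∧ VNIsNormal 𝔣s ∧
    𝔣 = 𝔣r + 𝔣s ∧ VNAbsCont 𝔣r 𝔤 ∧ VNSingular 𝔣s 𝔤

end VonNeumannDefs

section VonNeumannGlobal

variable {H : Type} [NormedAddCommGroup H] [InnerProductSpace ℂ H] [CompleteSpace H]

/-- The Lebesgue decomposition of normal positive functionals over the von Neumann
algebra `M` is unique. -/
def VNLebDecompUnique (M : VonNeumannAlgebra H) : Prop :=
  ∀ 𝔣 𝔤 : ↥M →ₗ[ℂ] ℂ, VNIsPos 𝔣 → VNIsNormal 𝔣 → VNIsPos 𝔤 → VNIsNormal 𝔤 →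
    ∀ 𝔣r 𝔣s 𝔣r' 𝔣s' : ↥M →ₗ[ℂ] ℂ,
      VNIsLebDecomp 𝔣 𝔤 𝔣r 𝔣s → VNIsLebDecomp 𝔣 𝔤 𝔣r' 𝔣s' → 𝔣r = 𝔣r' ∧ 𝔣s = 𝔣s'

/-- A von Neumann algebra is finite if `x⋆x = 1` implies `xx⋆ = 1`. -/
def VNFinite (M : VonNeumannAlgebra H) : Prop :=
  ∀ x : ↥M, star x * x = 1 → x * star x = 1

end VonNeumannGlobal

/-!
Let `h = f + g`, and let `T` be the Radon-Nikodym derivative of `f` on the GNS space of `h`, so that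
`1 - T` is the derivative of `g`. Since `T - T ^ (n + 1) ≤ n (1 - T)`, the functionals with density
`T - T ^ (n + 1)` increase and are bounded by multiples of `g`, and they converge to `f` as soon as
`1 - T` is injective. A vector in its kernel is a limit of elements `z k` that tend to `0` for `g`.
If `M` is finite, then `x ↦ star x` is continuous at `0` on the unit ball for the `g`-seminorm: if
`star (x k)` tends to `0` for `g`, an Egorov argument provides, along a subsequence, projections
`E n` decreasing to `0` such that `(1 - E n) * x k` tends to `0` in norm for each `n`, while the
`g`-seminorm of `E n * y` tends to `0` uniformly for `y` in the unit ball, since otherwise `M` would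
contain infinitely many equivalent orthogonal nonzero projections. Applied to the contractions
`(1 + z k * star (z k)) ^ (-1/2) * z k`, this shows that the limit of the `z k` is `0`.

Conversely, let `v` be an isometry with defect `e = 1 - v * star v`, and `w k = v ^ k * e`. Then
`star (w k)` tends to `0` for `g`, and so does `x n = 4 ^ n * star (w (φ n))` for a suitable `φ`.
With `y = ∑ n, 4 ^ (-n) * w (φ n)` we have `x n * y = e`. For `f = g (star (1 + y) * · * (1 + y))`
the `f`-seminorm of `x n` is the `g`-seminorm of `x n + e`. Hence the `x n` are Cauchy for `f`, and
absolute continuity forces their `f`-seminorms to tend to `0`, so `e = 0`.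
-/

namespace Kosaki

open Filter Topology

section CStarAlgebra

variable {A : Type*} [CStarAlgebra A] [PartialOrder A] [StarOrderedRing A]

lemma norm_le_one_of_star_mul_self_le_one {x : A} (h : star x * x ≤ 1) : ‖x‖ ≤ 1 := by
  have hx : ‖x‖ * ‖x‖ ≤ 1 := by
    rw [← CStarRing.norm_star_mul_self]
    exact CStarAlgebra.norm_le_one_iff_of_nonneg _ (star_mul_self_nonneg x) |>.2 h
  nlinarith [norm_nonneg x]

lemma star_mul_self_le_one {x : A} (h : ‖x‖ ≤ 1) : star x * x ≤ 1 := by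
  rw [← CStarAlgebra.norm_le_one_iff_of_nonneg _ (star_mul_self_nonneg x),
    CStarRing.norm_star_mul_self]
  exact mul_le_one₀ h (norm_nonneg x) h

lemma norm_le_one_of_isStarProjection_star_mul_self {x : A} (h : IsStarProjection (star x * x)) :
    ‖x‖ ≤ 1 :=
  norm_le_one_of_star_mul_self_le_one h.le_one

lemma mul_self_le_norm_smul {a : A} (ha : 0 ≤ a) : a * a ≤ ‖a‖ • a := by
  have h := CStarAlgebra.star_left_conjugate_le_norm_smul (a := CFC.sqrt a) (b := a)
  have hs := CFC.sqrt_mul_sqrt_self a ha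
  rw [(CFC.sqrt_nonneg a).isSelfAdjoint.star_eq, hs] at h
  calc a * a = CFC.sqrt a * (CFC.sqrt a * CFC.sqrt a) * CFC.sqrt a := by
        rw [← mul_assoc, mul_assoc _ (CFC.sqrt a), hs]
    _ = CFC.sqrt a * a * CFC.sqrt a := by rw [hs]
    _ ≤ ‖a‖ • a := h

lemma mul_eq_zero_of_star_mul_mul_eq_zero {a t : A} (ha : 0 ≤ a) (h : star t * a * t = 0) :
    a * t = 0 := by
  have hs := CFC.sqrt_mul_sqrt_self a ha
  have hst : CFC.sqrt a * t = 0 := by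
    rw [← CStarRing.star_mul_self_eq_zero_iff, star_mul,
      (CFC.sqrt_nonneg a).isSelfAdjoint.star_eq, mul_assoc, ← mul_assoc _ _ t, hs, ← mul_assoc, h]
  rw [← hs, mul_assoc, hst, mul_zero]

lemma mul_eq_zero_of_le {a b t : A} (ha : 0 ≤ a) (hab : a ≤ b) (h : b * t = 0) : a * t = 0 := by
  refine mul_eq_zero_of_star_mul_mul_eq_zero ha
    (le_antisymm ?_ (star_left_conjugate_nonneg ha t))
  calc star t * a * t ≤ star t * b * t := star_left_conjugate_le_conjugate hab t
    _ = 0 := by rw [mul_assoc, h, mul_zero]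

/-- The operator monotone transform `a ↦ a / (1 + a)` of the positive cone. -/
noncomputable def shrink (a : A) : A := cfc (fun t : ℝ ↦ 1 - (1 + t)⁻¹) a

lemma continuousOn_one_sub_one_add_inv :
    ContinuousOn (fun t : ℝ ↦ 1 - (1 + t)⁻¹) (Set.Ici 0) := by
  have h : ∀ t ∈ Set.Ici (0 : ℝ), 1 + t ≠ 0 := fun t ht ↦ by
    have : 0 ≤ t := ht
    positivity
  fun_prop (disch := assumption)

lemma continuousOn_shrink {a : A} (ha : 0 ≤ a) :
    ContinuousOn (fun t : ℝ ↦ 1 - (1 + t)⁻¹) (spectrum ℝ a) :=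
  continuousOn_one_sub_one_add_inv.mono fun _ ht ↦ spectrum_nonneg_of_nonneg ha ht

lemma shrink_le_shrink {a b : A} (ha : 0 ≤ a) (hab : a ≤ b) : shrink a ≤ shrink b := by
  have hcfc {c : A} (hc : 0 ≤ c) : cfcₙ (fun t : ℝ ↦ 1 - (1 + t)⁻¹) c = shrink c :=
    cfcₙ_eq_cfc (continuousOn_one_sub_one_add_inv.mono fun t ht ↦
      quasispectrum_nonneg_of_nonneg c hc t ht)
  rw [← hcfc ha, ← hcfc (ha.trans hab)]
  exact CFC.monotoneOn_one_sub_one_add_inv_real ha (ha.trans hab) hab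

lemma shrink_nonneg {a : A} (ha : 0 ≤ a) : 0 ≤ shrink a := by
  rw [shrink]
  refine cfc_nonneg fun t ht ↦ ?_
  have := spectrum_nonneg_of_nonneg ha ht
  exact sub_nonneg.2 (inv_le_one_of_one_le₀ (by linarith))

lemma shrink_le_one {a : A} (ha : 0 ≤ a) : shrink a ≤ 1 := by
  rw [shrink]
  refine cfc_le_one _ _ fun t ht ↦ ?_
  have := spectrum_nonneg_of_nonneg ha ht
  exact sub_le_self _ (by positivity)

lemma shrink_le_self {a : A} (ha : 0 ≤ a) : shrink a ≤ a := by
  conv_rhs => rw [← cfc_id' ℝ a]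
  rw [shrink]
  refine cfc_mono (fun t ht ↦ ?_) (continuousOn_shrink ha)
  have := spectrum_nonneg_of_nonneg ha ht
  rw [sub_le_iff_le_add, ← one_div, ← sub_nonneg]
  have : t + 1 / (1 + t) - 1 = t ^ 2 / (1 + t) := by field_simp; ring
  rw [this]; positivity

lemma le_two_smul_shrink {a : A} (ha : 0 ≤ a) (h1 : a ≤ 1) : a ≤ (2 : ℝ) • shrink a := by
  conv_lhs => rw [← cfc_id' ℝ a]
  rw [shrink, ← cfc_smul _ _ _ (continuousOn_shrink ha)]
  refine cfc_mono (fun t ht ↦ ?_) (by fun_prop) (.const_smul (continuousOn_shrink ha) (2 : ℝ))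
  have h0 := spectrum_nonneg_of_nonneg ha ht
  have h1 : t ≤ 1 := (CFC.le_one_iff (R := ℝ) a).1 h1 t ht
  rw [smul_eq_mul, ← sub_nonneg]
  have : 2 * (1 - (1 + t)⁻¹) - t = t * (1 - t) / (1 + t) := by field_simp; ring
  rw [this]
  exact div_nonneg (mul_nonneg h0 (sub_nonneg.2 h1)) (by positivity)

lemma mul_one_sub_shrink {a : A} (ha : 0 ≤ a) : a * (1 - shrink a) = shrink a := by
  nth_rw 1 [← cfc_id' ℝ a]
  rw [shrink, ← cfc_const_one ℝ a, ← cfc_sub _ _ _ (by fun_prop) (continuousOn_shrink ha),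
    ← cfc_mul _ (fun t : ℝ ↦ 1 - (1 - (1 + t)⁻¹)) _ (by fun_prop)
      (continuousOn_const.sub (continuousOn_shrink ha))]
  refine cfc_congr fun t ht ↦ ?_
  have := spectrum_nonneg_of_nonneg ha ht
  field_simp
  ring

lemma exists_mul_self_eq_one_sub_shrink (z : A) : ∃ u : A, 0 ≤ u ∧
    u * u = 1 - shrink (z * star z) ∧ (u * z) * star (u * z) = shrink (z * star z) := by
  set b := z * star z with hb
  have hb0 : 0 ≤ b := mul_star_self_nonneg z
  have hpos : ∀ t ∈ spectrum ℝ b, 0 < 1 + t := fun t ht ↦ by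
    have := spectrum_nonneg_of_nonneg hb0 ht
    positivity
  have hcont : ContinuousOn (fun t : ℝ ↦ (√(1 + t))⁻¹) (spectrum ℝ b) :=
    ContinuousOn.inv₀ (by fun_prop) fun t ht ↦ (Real.sqrt_pos.2 (hpos t ht)).ne'
  have hu0 : 0 ≤ cfc (fun t : ℝ ↦ (√(1 + t))⁻¹) b := cfc_nonneg fun t _ ↦ by positivity
  have huu : cfc (fun t : ℝ ↦ (√(1 + t))⁻¹) b * cfc (fun t : ℝ ↦ (√(1 + t))⁻¹) b =
      1 - shrink b := by
    rw [shrink, ← cfc_mul _ _ _ hcont hcont, ← cfc_const_one ℝ b,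
      ← cfc_sub _ _ _ (by fun_prop) (continuousOn_shrink hb0)]
    refine cfc_congr fun t ht ↦ ?_
    simp [← mul_inv, Real.mul_self_sqrt (hpos t ht).le]
  refine ⟨_, hu0, huu, ?_⟩
  rw [star_mul, hu0.isSelfAdjoint.star_eq, mul_assoc, ← mul_assoc z, ← hb, ← mul_assoc, shrink]
  nth_rw 2 [← cfc_id' ℝ b]
  rw [← cfc_mul _ _ _ hcont (by fun_prop),
    ← cfc_mul (fun t : ℝ ↦ (√(1 + t))⁻¹ * t) _ b (by fun_prop) hcont]
  refine cfc_congr fun t ht ↦ ?_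
  have h := hpos t ht
  have h' := (Real.sqrt_pos.2 h).ne'
  field_simp
  rw [Real.sq_sqrt h.le]
  ring

lemma norm_mul_le_one_of_le_one_sub_shrink {s y : A} (hs : 0 ≤ s)
    (hsy : s ≤ 1 - shrink (y * star y)) : ‖s * y‖ ≤ 1 := by
  obtain ⟨u, hu, huu, huy⟩ := exists_mul_self_eq_one_sub_shrink y
  have hyy := mul_star_self_nonneg y
  have hs1 : ‖s‖ ≤ 1 := (CStarAlgebra.norm_le_one_iff_of_nonneg s).2 <|
    hsy.trans (sub_le_self _ (shrink_nonneg hyy))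
  have huy1 : ‖star (u * y)‖ ≤ 1 := norm_le_one_of_star_mul_self_le_one <| by
    rw [star_star, huy]; exact shrink_le_one hyy
  refine norm_le_one_of_star_mul_self_le_one ?_
  calc star (s * y) * (s * y) = star y * (s * s) * y := by
        rw [star_mul, hs.isSelfAdjoint.star_eq]; noncomm_ring
    _ ≤ star y * (u * u) * y := by
        refine star_left_conjugate_le_conjugate ?_ y
        refine ((mul_self_le_norm_smul hs).trans ?_).trans (hsy.trans huu.ge)
        exact smul_le_of_le_one_left hs hs1
    _ = star (u * y) * (u * y) := by
        rw [star_mul, hu.isSelfAdjoint.star_eq]; noncomm_ring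
    _ ≤ 1 := star_mul_self_le_one (by rwa [norm_star] at huy1)

end CStarAlgebra

section StrongConvergence

variable {K : Type*} [NormedAddCommGroup K] [InnerProductSpace ℂ K] [CompleteSpace K]

open ContinuousLinearMap in
lemma norm_apply_sq_le_norm_mul_re_inner {d : K →L[ℂ] K} (hd : 0 ≤ d) (ζ : K) :
    ‖d ζ‖ ^ 2 ≤ ‖d‖ * (inner ℂ (d ζ) ζ).re := by
  have h : 0 ≤ (inner ℂ ((‖d‖ • d - d * d) ζ) ζ).re :=
    ((nonneg_iff_isPositive _).1 (sub_nonneg.2 (mul_self_le_norm_smul hd))).re_inner_nonneg_left ζ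
  have hdd : inner ℂ (d (d ζ)) ζ = inner ℂ (d ζ) (d ζ) :=
    ((nonneg_iff_isPositive d).1 hd).inner_left_eq_inner_right _ _
  have hsq : (inner ℂ (d ζ) (d ζ)).re = ‖d ζ‖ ^ 2 := inner_self_eq_norm_sq (𝕜 := ℂ) _
  simp only [sub_apply, smul_apply, mul_apply_eq_comp, inner_sub_left, hdd, Complex.sub_re, hsq,
    inner_smul_left_eq_smul, Complex.real_smul, Complex.re_ofReal_mul] at h
  linarith

lemma exists_tendsto_apply_of_antitone {a : ℕ → K →L[ℂ] K} (ha : Antitone a) (h0 : ∀ n, 0 ≤ a n) :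
    ∃ b : K →L[ℂ] K, ∀ ζ, Tendsto (fun n ↦ a n ζ) atTop (𝓝 (b ζ)) := by
  have hcauchy (ζ : K) : CauchySeq fun n ↦ a n ζ := by
    have hre (d : K →L[ℂ] K) (hd : 0 ≤ d) : 0 ≤ (inner ℂ (d ζ) ζ).re :=
      ((ContinuousLinearMap.nonneg_iff_isPositive d).1 hd).re_inner_nonneg_left ζ
    set φ : ℕ → ℝ := fun n ↦ (inner ℂ (a n ζ) ζ).re
    have hsub (m n : ℕ) : (inner ℂ ((a m - a n) ζ) ζ).re = φ m - φ n := by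
      simp [φ]
    have hφ : Antitone φ := fun m n hmn ↦ by
      linarith [hre _ (sub_nonneg.2 (ha hmn)), hsub m n]
    have hlim := tendsto_atTop_ciInf hφ ⟨0, by rintro _ ⟨n, rfl⟩; exact hre _ (h0 n)⟩
    have hbound (m n : ℕ) (hmn : m ≤ n) : ‖(a m - a n) ζ‖ ^ 2 ≤ ‖a 0‖ * (φ m - φ n) := by
      have hd := sub_nonneg.2 (ha hmn)
      refine (norm_apply_sq_le_norm_mul_re_inner hd ζ).trans ?_
      rw [hsub]
      refine mul_le_mul_of_nonneg_right ?_ (sub_nonneg.2 (hφ hmn))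
      exact CStarAlgebra.norm_le_norm_of_nonneg_of_le hd
        ((sub_le_self _ (h0 n)).trans (ha m.zero_le))
    refine Metric.cauchySeq_iff'.2 fun ε hε ↦ ?_
    obtain ⟨N, hN⟩ := Metric.cauchySeq_iff'.1 hlim.cauchySeq (ε ^ 2 / (‖a 0‖ + 1)) (by positivity)
    refine ⟨N, fun n hn ↦ ?_⟩
    have h1 := hN n hn
    rw [dist_comm, Real.dist_eq, abs_of_nonneg (sub_nonneg.2 (hφ hn)), lt_div_iff₀ (by positivity)]
      at h1
    rw [dist_comm, dist_eq_norm, ← sub_apply]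
    refine lt_of_pow_lt_pow_left₀ 2 hε.le ((hbound N n hn).trans_lt ?_)
    nlinarith [sub_nonneg.2 (hφ hn)]
  choose b hb using fun ζ ↦ cauchySeq_tendsto_of_complete (hcauchy ζ)
  exact ⟨continuousLinearMapOfTendsto a (tendsto_pi_nhds.2 hb), hb⟩

lemma inner_star_mul_self_apply (a : K →L[ℂ] K) (ζ : K) :
    inner ℂ ((star a * a) ζ) ζ = ((‖a ζ‖ ^ 2 : ℝ) : ℂ) := by
  rw [ContinuousLinearMap.star_eq_adjoint, mul_apply_eq_comp,
    ContinuousLinearMap.adjoint_inner_left, inner_self_eq_norm_sq_to_K]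
  simp

lemma norm_apply_eq_of_star_mul_self_eq {a b : K →L[ℂ] K} (h : star a * a = star b * b) (ζ : K) :
    ‖a ζ‖ = ‖b ζ‖ := by
  have := inner_star_mul_self_apply a ζ
  rw [h, inner_star_mul_self_apply b ζ, Complex.ofReal_inj] at this
  exact ((sq_eq_sq₀ (norm_nonneg _) (norm_nonneg _)).1 this).symm

lemma star_mul_self_eq_of_forall_norm_apply_eq {a b : K →L[ℂ] K} (h : ∀ ζ, ‖a ζ‖ = ‖b ζ‖) :
    star a * a = star b * b := by
  refine ContinuousLinearMap.coe_injective <| (ext_inner_map _ _).1 fun ζ ↦ ?_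
  exact (inner_star_mul_self_apply a ζ).trans
    ((congrArg (fun r : ℝ ↦ ((r ^ 2 : ℝ) : ℂ)) (h ζ)).trans (inner_star_mul_self_apply b ζ).symm)

end StrongConvergence

section VonNeumann

variable {H : Type} [NormedAddCommGroup H] [InnerProductSpace ℂ H] [CompleteSpace H]
  {M : VonNeumannAlgebra H}

lemma isClosed_coe (M : VonNeumannAlgebra H) : IsClosed (M : Set (H →L[ℂ] H)) := by
  rw [← M.centralizer_centralizer]
  exact Set.isClosed_centralizer _

scoped instance : IsClosed (M : Set (H →L[ℂ] H)) := isClosed_coe M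

lemma mem_iff_forall_commutant {x : H →L[ℂ] H} : x ∈ M ↔ ∀ y ∈ M.commutant, Commute x y := by
  conv_lhs => rw [← M.commutant_commutant]
  simp only [VonNeumannAlgebra.mem_commutant_iff, Commute.eq_1, SemiconjBy, eq_comm]

lemma sqrt_mem {a : H →L[ℂ] H} (ha : a ∈ M) (h0 : 0 ≤ a) : CFC.sqrt a ∈ M := by
  refine mem_iff_forall_commutant.2 fun y hy ↦ ?_
  rw [CFC.sqrt_eq_real_sqrt a h0, cfcₙ_eq_cfc]
  exact (mem_iff_forall_commutant.1 ha y hy).cfc_real _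

scoped instance : StarOrderedRing ↥M :=
  .of_nonneg_iff' (fun h z ↦ add_le_add_right (α := H →L[ℂ] H) h z) fun x ↦ by
    constructor
    · intro h
      have h : 0 ≤ (x : H →L[ℂ] H) := h
      refine ⟨⟨CFC.sqrt x, sqrt_mem x.2 h⟩, Subtype.ext ?_⟩
      simp [(CFC.sqrt_nonneg (x : H →L[ℂ] H)).isSelfAdjoint.star_eq,
        CFC.sqrt_mul_sqrt_self (x : H →L[ℂ] H)]
    · rintro ⟨s, rfl⟩
      exact star_mul_self_nonneg (s : H →L[ℂ] H)

/-- Convergence of a sequence in `M` for the strong operator topology. -/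
def SOTendsto (x : ℕ → ↥M) (y : ↥M) : Prop :=
  ∀ ζ : H, Tendsto (fun n ↦ (x n : H →L[ℂ] H) ζ) atTop (𝓝 ((y : H →L[ℂ] H) ζ))

namespace SOTendsto

variable {x z : ℕ → ↥M} {y w : ↥M}

lemma unique (hx : SOTendsto x y) (hx' : SOTendsto x w) : y = w :=
  Subtype.ext <| ContinuousLinearMap.ext fun ζ ↦ tendsto_nhds_unique (hx ζ) (hx' ζ)

lemma const (y : ↥M) : SOTendsto (fun _ ↦ y) y := fun _ ↦ tendsto_const_nhds

lemma comp (hx : SOTendsto x y) {φ : ℕ → ℕ} (hφ : Tendsto φ atTop atTop) :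
    SOTendsto (x ∘ φ) y :=
  fun ζ ↦ (hx ζ).comp hφ

lemma of_norm_sub (h : Tendsto (fun n ↦ ‖x n - y‖) atTop (𝓝 0)) : SOTendsto x y := fun ζ ↦ by
  refine tendsto_iff_norm_sub_tendsto_zero.2 <|
    squeeze_zero (fun _ ↦ norm_nonneg _) (fun n ↦ ?_) (by simpa using h.mul_const ‖ζ‖)
  exact (x n - y : H →L[ℂ] H).le_opNorm ζ

lemma eq_of_eventually_eq (hx : SOTendsto x y) (h : ∀ᶠ n in atTop, x n = w) : y = w :=
  Subtype.ext <| ContinuousLinearMap.ext fun ζ ↦ tendsto_nhds_unique (hx ζ) <|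
    tendsto_const_nhds.congr' (h.mono fun n hn ↦ by simp only [hn])

lemma sub (hx : SOTendsto x y) (hz : SOTendsto z w) : SOTendsto (fun n ↦ x n - z n) (y - w) :=
  fun ζ ↦ (hx ζ).sub (hz ζ)

lemma const_mul (hx : SOTendsto x y) (c : ↥M) : SOTendsto (fun n ↦ c * x n) (c * y) :=
  fun ζ ↦ ((c : H →L[ℂ] H).continuous.tendsto _).comp (hx ζ)

lemma mul_const (hx : SOTendsto x y) (c : ↥M) : SOTendsto (fun n ↦ x n * c) (y * c) :=
  fun ζ ↦ hx ((c : H →L[ℂ] H) ζ)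

lemma nonneg (hx : SOTendsto x y) (h : ∀ᶠ n in atTop, 0 ≤ x n) : 0 ≤ y := by
  have hy : (y : H →L[ℂ] H).IsPositive := by
    refine ContinuousLinearMap.isPositive_iff_complex _ |>.2 fun ζ ↦ ?_
    have hlim := (hx ζ).inner (𝕜 := ℂ) (tendsto_const_nhds (x := ζ))
    have hnn : 0 ≤ inner ℂ ((y : H →L[ℂ] H) ζ) ζ := ge_of_tendsto hlim <| h.mono fun n hn ↦
      ((ContinuousLinearMap.nonneg_iff_isPositive _).1 hn).inner_nonneg_left ζ
    obtain ⟨h0, him⟩ := Complex.le_def.1 hnn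
    exact ⟨Complex.ext rfl him, h0⟩
  exact (ContinuousLinearMap.nonneg_iff_isPositive _).2 hy

lemma le (hx : SOTendsto x y) (hz : SOTendsto z w) (h : ∀ᶠ n in atTop, x n ≤ z n) : y ≤ w :=
  sub_nonneg.1 <| (hz.sub hx).nonneg <| h.mono fun _ ↦ sub_nonneg.2

lemma le_of_antitone (hx : SOTendsto x y) (hanti : Antitone x) (n : ℕ) : y ≤ x n :=
  hx.le (.const _) <| eventually_atTop.2 ⟨n, fun _ h ↦ hanti h⟩

lemma star_mul_self_eq (hx : SOTendsto x y) (hz : SOTendsto z w)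
    (h : ∀ n, star (x n) * x n = star (z n) * z n) : star y * y = star w * w := by
  refine Subtype.ext (star_mul_self_eq_of_forall_norm_apply_eq fun ζ ↦ ?_)
  exact tendsto_nhds_unique (hx ζ).norm ((hz ζ).norm.congr fun n ↦
    (norm_apply_eq_of_star_mul_self_eq (congrArg Subtype.val (h n)) ζ).symm)

end SOTendsto

lemma exists_sotendsto_of_cauchySeq {x : ℕ → ↥M}
    (hx : ∀ ζ : H, CauchySeq fun n ↦ (x n : H →L[ℂ] H) ζ) : ∃ y, SOTendsto x y := by
  choose y hy using fun ζ ↦ cauchySeq_tendsto_of_complete (hx ζ)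
  refine ⟨⟨continuousLinearMapOfTendsto (fun n ↦ (x n : H →L[ℂ] H)) (tendsto_pi_nhds.2 hy),
    mem_iff_forall_commutant.2 fun c hc ↦ ContinuousLinearMap.ext fun ζ ↦ ?_⟩, hy⟩
  refine tendsto_nhds_unique (hy (c ζ)) (((c.continuous.tendsto _).comp (hy ζ)).congr fun n ↦ ?_)
  exact DFunLike.congr_fun (mem_iff_forall_commutant.1 (x n).2 c hc).eq.symm ζ

lemma exists_sotendsto_of_antitone {x : ℕ → ↥M} (hx : Antitone x) (h0 : ∀ n, 0 ≤ x n) :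
    ∃ y, 0 ≤ y ∧ (∀ n, y ≤ x n) ∧ SOTendsto x y := by
  obtain ⟨b, hb⟩ := exists_tendsto_apply_of_antitone
    (a := fun n ↦ (x n : H →L[ℂ] H)) (fun _ _ h ↦ hx h) h0
  obtain ⟨y, hy⟩ := exists_sotendsto_of_cauchySeq fun ζ ↦ (hb ζ).cauchySeq
  exact ⟨y, hy.nonneg (.of_forall h0), hy.le_of_antitone hx, hy⟩

lemma exists_sotendsto_of_star_mul_self_sub_eq {x p : ℕ → ↥M} {q : ↥M} (hp : SOTendsto p q)
    (h : ∀ m n, m ≤ n → star (x n - x m) * (x n - x m) = star (p n - p m) * (p n - p m)) :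
    ∃ y, SOTendsto x y := by
  refine exists_sotendsto_of_cauchySeq fun ζ ↦ Metric.cauchySeq_iff'.2 fun ε hε ↦ ?_
  obtain ⟨N, hN⟩ := Metric.cauchySeq_iff'.1 (hp ζ).cauchySeq ε hε
  refine ⟨N, fun n hn ↦ ?_⟩
  rw [dist_eq_norm, ← sub_apply]
  refine (norm_apply_eq_of_star_mul_self_eq (congrArg Subtype.val (h N n hn)) ζ).trans_lt ?_
  simpa [dist_eq_norm] using hN n hn

lemma exists_isStarProjection_sotendsto {F : ℕ → ↥M} (hF : ∀ n, IsStarProjection (F n))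
    (hanti : Antitone F) :
    ∃ F' : ↥M, IsStarProjection F' ∧ (∀ n, F' ≤ F n) ∧ SOTendsto F F' := by
  obtain ⟨F', h0, hle, hlim⟩ := exists_sotendsto_of_antitone hanti fun n ↦ (hF n).nonneg
  have hmul (m : ℕ) : F m * F' = F' := sub_eq_zero.1 <|
    ((hlim.const_mul (F m)).sub hlim).eq_of_eventually_eq <| eventually_atTop.2
      ⟨m, fun n hn ↦ sub_eq_zero.2 (((hF n).le_iff_mul_eq_right (hF m)).1 (hanti hn))⟩
  have hidem : F' * F' = F' := (hlim.mul_const F').eq_of_eventually_eq (.of_forall hmul)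
  exact ⟨F', ⟨hidem, h0.isSelfAdjoint⟩, hle, hlim⟩

end VonNeumann

section Support

variable {H : Type} [NormedAddCommGroup H] [InnerProductSpace ℂ H] [CompleteSpace H]
  {M : VonNeumannAlgebra H}

lemma exists_sotendsto_shrink {a : ↥M} (ha : 0 ≤ a) :
    ∃ p : ↥M, IsStarProjection p ∧ a * p = a ∧ SOTendsto (fun n : ℕ ↦ shrink ((n : ℝ) • a)) p := by
  have hna (n : ℕ) : 0 ≤ (n : ℝ) • a := smul_nonneg n.cast_nonneg ha
  obtain ⟨q, hq0, -, hq⟩ := exists_sotendsto_of_antitone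
    (x := fun n : ℕ ↦ 1 - shrink ((n : ℝ) • a))
    (fun m n h ↦ sub_le_sub_left (shrink_le_shrink (hna m)
      (smul_le_smul_of_nonneg_right (Nat.cast_le.2 h) ha)) _)
    (fun n ↦ sub_nonneg.2 (shrink_le_one (hna n)))
  have hp : SOTendsto (fun n : ℕ ↦ shrink ((n : ℝ) • a)) (1 - q) := by
    simpa using (SOTendsto.const 1).sub hq
  have haq : a * q = 0 := by
    refine (hq.const_mul a).unique (.of_norm_sub ?_)
    refine squeeze_zero' (.of_forall fun _ ↦ norm_nonneg _) ?_
      tendsto_inv_atTop_nhds_zero_nat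
    filter_upwards [eventually_gt_atTop 0] with n hn
    have hn' : (n : ℝ) ≠ 0 := by positivity
    have : a * (1 - shrink ((n : ℝ) • a)) = (n : ℝ)⁻¹ • shrink ((n : ℝ) • a) := by
      conv_rhs => rw [← mul_one_sub_shrink (hna n), smul_mul_assoc, inv_smul_smul₀ hn']
    rw [sub_zero, this, norm_smul, norm_inv, Real.norm_natCast]
    exact mul_le_of_le_one_right (by positivity)
      ((CStarAlgebra.norm_le_one_iff_of_nonneg _ (shrink_nonneg (hna n))).2 (shrink_le_one (hna n)))
  have hqa : q * a = 0 := by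
    simpa [ha.isSelfAdjoint.star_eq, hq0.isSelfAdjoint.star_eq] using congrArg star haq
  have hqq : q * (1 - q) = 0 := by
    refine (hp.const_mul q).eq_of_eventually_eq (.of_forall fun n ↦ ?_)
    rw [← mul_one_sub_shrink (hna n), ← mul_assoc, mul_smul_comm, hqa, smul_zero, zero_mul]
  refine ⟨1 - q, .one_sub ⟨?_, hq0.isSelfAdjoint⟩, by rw [mul_sub, haq, mul_one, sub_zero], hp⟩
  rwa [mul_sub, mul_one, sub_eq_zero, eq_comm] at hqq

lemma exists_phase (x : ↥M) : ∃ v : ↥M, IsStarProjection (star v * v) ∧ x * (star v * v) = x ∧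
    (∀ t, t * x = 0 → t * v = 0) ∧ ∀ t, x * t = 0 → v * t = 0 := by
  set a := CFC.abs x
  have ha : 0 ≤ a := CFC.abs_nonneg x
  have hxa (t : ↥M) : star (x * t) * (x * t) = star (a * t) * (a * t) := by
    have : a * a = star x * x := CFC.abs_mul_abs x
    rw [star_mul, star_mul, ha.isSelfAdjoint.star_eq, mul_assoc, ← mul_assoc _ x, ← this]
    noncomm_ring
  obtain ⟨p, hp, hap, hlim⟩ := exists_sotendsto_shrink ha
  have hzero (t : ↥M) (h : a * t = 0) : x * t = 0 := by
    rw [← CStarRing.star_mul_self_eq_zero_iff, hxa, h, mul_zero]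
  set k : ℕ → ↥M := fun n ↦ (n : ℝ) • (1 - shrink ((n : ℝ) • a))
  have hak (n : ℕ) : a * k n = shrink ((n : ℝ) • a) := by
    rw [mul_smul_comm, ← smul_mul_assoc, mul_one_sub_shrink (smul_nonneg n.cast_nonneg ha)]
  simp only [← hak] at hlim
  obtain ⟨v, hv⟩ := exists_sotendsto_of_star_mul_self_sub_eq (x := fun n ↦ x * k n) hlim
    fun m n _ ↦ by rw [← mul_sub, ← mul_sub, hxa]
  have hvv : star v * v = p := by
    rw [hv.star_mul_self_eq hlim fun n ↦ hxa (k n), hp.isSelfAdjoint.star_eq, hp.isIdempotentElem]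
  refine ⟨v, hvv ▸ hp, ?_, fun t ht ↦ ?_, fun t ht ↦ ?_⟩
  · have := hzero (1 - p) (by rw [mul_sub, mul_one, hap, sub_self])
    rwa [hvv, eq_comm, ← sub_eq_zero, ← mul_one_sub]
  · refine (hv.const_mul t).eq_of_eventually_eq (.of_forall fun n ↦ ?_)
    rw [← mul_assoc, ht, zero_mul]
  · have hat : a * t = 0 := by
      rw [← CStarRing.star_mul_self_eq_zero_iff, ← hxa, ht, mul_zero]
    have hpt : p * t = 0 := by
      refine (hlim.mul_const t).eq_of_eventually_eq (.of_forall fun n ↦ ?_)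
      have hna : 0 ≤ (n : ℝ) • a := smul_nonneg n.cast_nonneg ha
      rw [hak, mul_eq_zero_of_le (shrink_nonneg hna) (shrink_le_self hna)
        (by rw [smul_mul_assoc, hat, smul_zero])]
    rw [← CStarRing.star_mul_self_eq_zero_iff, star_mul, mul_assoc, ← mul_assoc (star v), hvv, hpt,
      mul_zero]

/-- The partial isometry of the polar decomposition of `x`, characterised only by the algebraic
properties listed in `exists_phase`. -/
noncomputable def phase (x : ↥M) : ↥M := (exists_phase x).choose

/-- The right support of `x`: the smallest projection `p` with `x * p = x`. -/
noncomputable def rightSupport (x : ↥M) : ↥M := star (phase x) * phase x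

lemma isStarProjection_rightSupport (x : ↥M) : IsStarProjection (rightSupport x) :=
  (exists_phase x).choose_spec.1

lemma mul_rightSupport (x : ↥M) : x * rightSupport x = x :=
  (exists_phase x).choose_spec.2.1

lemma mul_phase_eq_zero {x t : ↥M} (h : t * x = 0) : t * phase x = 0 :=
  (exists_phase x).choose_spec.2.2.1 t h

lemma rightSupport_mul_eq_zero {x t : ↥M} (h : x * t = 0) : rightSupport x * t = 0 := by
  rw [rightSupport, mul_assoc, phase, (exists_phase x).choose_spec.2.2.2 t h, mul_zero]

lemma rightSupport_mul_of_mul_eq {x t : ↥M} (h : x * t = x) :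
    rightSupport x * t = rightSupport x := by
  have := rightSupport_mul_eq_zero (x := x) (t := 1 - t) (by rw [mul_sub, mul_one, h, sub_self])
  rwa [mul_sub, mul_one, sub_eq_zero, eq_comm] at this

lemma rightSupport_le {x F : ↥M} (hF : IsStarProjection F) (h : x * F = x) :
    rightSupport x ≤ F :=
  ((isStarProjection_rightSupport x).le_iff_mul_eq_left hF).2 (rightSupport_mul_of_mul_eq h)

lemma rightSupport_mul_le {p : ↥M} (x : ↥M) (hp : IsStarProjection p) : rightSupport (x * p) ≤ p :=
  rightSupport_le hp (by rw [mul_assoc, hp.isIdempotentElem])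

lemma mul_sub_rightSupport_mul {p : ↥M} (x : ↥M) (hp : IsStarProjection p) :
    x * (p - rightSupport (x * p)) = 0 := by
  have := ((isStarProjection_rightSupport _).le_iff_mul_eq_right hp).1 (rightSupport_mul_le x hp)
  rw [mul_sub, ← this, ← mul_assoc, mul_rightSupport, sub_self]

lemma mul_phase_of_mul_eq {x t : ↥M} (h : t * x = x) : t * phase x = phase x := by
  have := mul_phase_eq_zero (x := x) (t := 1 - t) (by rw [sub_mul, one_mul, h, sub_self])
  rwa [sub_mul, one_mul, sub_eq_zero, eq_comm] at this

end Support

section Functional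

lemma re_map_le {E : Type*} [AddCommMonoid E] [PartialOrder E] [Module ℂ E] (f : E →ₚ[ℂ] ℂ)
    {x y : E} (h : x ≤ y) : (f x).re ≤ (f y).re :=
  (Complex.le_def.1 (OrderHomClass.mono f h)).1

variable {A : Type*} [CStarAlgebra A] [PartialOrder A] [StarOrderedRing A] {f : A →ₚ[ℂ] ℂ}

lemma norm_toPreGNS_sq (x : A) : ((‖f.toPreGNS x‖ ^ 2 : ℝ) : ℂ) = f (star x * x) := by
  simpa using f.preGNS_norm_sq (f.toPreGNS x)

lemma norm_toPreGNS_le_of_map_le {h : A →ₚ[ℂ] ℂ} {x y : A}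
    (hxy : f (star x * x) ≤ h (star y * y)) : ‖f.toPreGNS x‖ ≤ ‖h.toPreGNS y‖ := by
  rw [← norm_toPreGNS_sq, ← norm_toPreGNS_sq, Complex.real_le_real] at hxy
  exact (sq_le_sq₀ (norm_nonneg _) (norm_nonneg _)).1 hxy

lemma norm_toPreGNS_mul_le (a x : A) : ‖f.toPreGNS (a * x)‖ ≤ ‖a‖ * ‖f.toPreGNS x‖ :=
  (f.leftMulMapPreGNS a).le_of_opNorm_le (LinearMap.mkContinuous_norm_le _ (norm_nonneg a) _) _

lemma norm_toPreGNS_mul_le_of_norm_le_one {a : A} (ha : ‖a‖ ≤ 1) (x : A) :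
    ‖f.toPreGNS (a * x)‖ ≤ ‖f.toPreGNS x‖ :=
  (norm_toPreGNS_mul_le a x).trans (mul_le_of_le_one_left (norm_nonneg _) ha)

lemma eq_zero_of_re_map_nonpos (hf : ∀ x, f (star x * x) = 0 → x = 0) {c : A} (hc : 0 ≤ c)
    (h : (f c).re ≤ 0) : c = 0 := by
  have h0 := Complex.le_def.1 (map_nonneg f hc)
  have hfc : f c = 0 := Complex.ext (le_antisymm h h0.1) h0.2.symm
  obtain ⟨y, rfl⟩ := CStarAlgebra.nonneg_iff_eq_star_mul_self.1 hc
  rw [hf y hfc, mul_zero]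

end Functional

section Normal

variable {H : Type} [NormedAddCommGroup H] [InnerProductSpace ℂ H] [CompleteSpace H]
  {M : VonNeumannAlgebra H} {f g : ↥M →ₚ[ℂ] ℂ}

/-- A functional that is positive in the sense of `VNIsPos`, as a bundled positive map. -/
noncomputable def toPos (f : ↥M →ₗ[ℂ] ℂ) (hf : VNIsPos f) : ↥M →ₚ[ℂ] ℂ :=
  PositiveLinearMap.mk₀ f fun x hx ↦ by
    obtain ⟨y, rfl⟩ := CStarAlgebra.nonneg_iff_eq_star_mul_self.1 hx
    exact hf y

lemma isPos_toLinearMap (f : ↥M →ₚ[ℂ] ℂ) : VNIsPos f.toLinearMap := fun x ↦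
  map_nonneg f (star_mul_self_nonneg x)

lemma tendsto_of_monotone_of_isLUB {ι : Type*} [Preorder ι] {u : ι → ℂ} {c : ℂ}
    (hu : Monotone u) (hc : IsLUB (Set.range u) c) : Tendsto u atTop (𝓝 c) := by
  have him (i : ι) : (u i).im = c.im := (Complex.le_def.1 (hc.1 ⟨i, rfl⟩)).2
  have hre : IsLUB (Set.range fun i ↦ (u i).re) c.re := by
    refine ⟨?_, fun t ht ↦ ?_⟩
    · rintro _ ⟨i, rfl⟩
      exact (Complex.le_def.1 (hc.1 ⟨i, rfl⟩)).1
    · refine (Complex.le_def.1 (hc.2 (show Complex.mk t c.im ∈ _ from ?_))).1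
      rintro _ ⟨i, rfl⟩
      exact Complex.le_def.2 ⟨ht ⟨i, rfl⟩, him i⟩
  have hlim : Tendsto (fun i ↦ (u i).re) atTop (𝓝 c.re) :=
    tendsto_atTop_isLUB (fun i j h ↦ (Complex.le_def.1 (hu h)).1) hre
  have := (Complex.continuous_ofReal.tendsto _).comp hlim |>.add_const (c.im * Complex.I)
  rw [Complex.re_add_im] at this
  exact this.congr fun i ↦ by simp [← him i]

lemma isNormal_iff_tendsto : VNIsNormal f.toLinearMap ↔
    ∀ (ι : Type) [Preorder ι] [IsDirected ι (· ≤ ·)] [Nonempty ι] (x : ι → ↥M) (y : ↥M),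
      (∀ i, 0 ≤ x i) → Monotone x → IsLUB (Set.range x) y →
      Tendsto (fun i ↦ f (x i)) atTop (𝓝 (f y)) := by
  have hmono {ι : Type} [Preorder ι] {x : ι → ↥M} (hx : Monotone x) :
      Monotone fun i ↦ f (x i) := (OrderHomClass.mono f).comp hx
  constructor
  · intro hf ι _ _ _ x y h0 hx hy
    refine tendsto_of_monotone_of_isLUB (hmono hx) ?_
    refine hf ι x y (fun i ↦ (ContinuousLinearMap.nonneg_iff_isPositive _).1 (h0 i))
      (fun i j h ↦ hx h) ⟨‖y‖, fun i ↦ ?_⟩ (fun i ↦ hy.1 ⟨i, rfl⟩) fun z hz ↦ hy.2 ?_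
    · exact CStarAlgebra.norm_le_norm_of_nonneg_of_le (h0 i) (hy.1 ⟨i, rfl⟩)
    · rintro _ ⟨i, rfl⟩
      exact hz i
  · intro hf ι _ _ _ x y h0 hx _ hxy hy
    refine isLUB_of_tendsto_atTop (hmono fun i j h ↦ hx i j h) <|
      hf ι x y (fun i ↦ (ContinuousLinearMap.nonneg_iff_isPositive _).2 (h0 i))
        (fun i j h ↦ hx i j h) ⟨?_, fun z hz ↦ hy z fun i ↦ hz ⟨i, rfl⟩⟩
    rintro _ ⟨i, rfl⟩
    exact hxy i

lemma tendsto_map_of_antitone (hf : VNIsNormal f.toLinearMap) {x : ℕ → ↥M} {y : ↥M}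
    (hx : Antitone x) (hxy : SOTendsto x y) : Tendsto (fun n ↦ f (x n)) atTop (𝓝 (f y)) := by
  have hmono : Monotone fun n ↦ x 0 - x n := fun m n h ↦ sub_le_sub_left (hx h) _
  have hlim := (SOTendsto.const (x 0)).sub hxy
  have hlub : IsLUB (Set.range fun n ↦ x 0 - x n) (x 0 - y) := by
    refine ⟨?_, fun z hz ↦ hlim.le (.const z) (.of_forall fun n ↦ hz ⟨n, rfl⟩)⟩
    rintro _ ⟨n, rfl⟩
    exact sub_le_sub_left (hxy.le_of_antitone hx n) _
  have := (isNormal_iff_tendsto.1 hf ℕ _ _ (fun n ↦ sub_nonneg.2 (hx n.zero_le)) hmono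
    hlub).const_sub (f (x 0))
  simpa using this

lemma isNormal_add (hf : VNIsNormal f.toLinearMap) (hg : VNIsNormal g.toLinearMap) :
    VNIsNormal (f + g).toLinearMap :=
  isNormal_iff_tendsto.2 fun ι _ _ _ x y h0 hx hy ↦
    (isNormal_iff_tendsto.1 hf ι x y h0 hx hy).add (isNormal_iff_tendsto.1 hg ι x y h0 hx hy)

lemma map_le_of_VNLE {φ ψ : ↥M →ₗ[ℂ] ℂ} (h : VNLE φ ψ) {a : ↥M} (ha : 0 ≤ a) : φ a ≤ ψ a := by
  obtain ⟨y, rfl⟩ := CStarAlgebra.nonneg_iff_eq_star_mul_self.1 ha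
  exact sub_nonneg.1 (h y)

lemma isNormal_of_le_smul {c : ℂ} (hg : VNIsNormal g.toLinearMap)
    (h : VNLE f.toLinearMap (c • g.toLinearMap)) : VNIsNormal f.toLinearMap := by
  refine isNormal_iff_tendsto.2 fun ι _ _ _ x y h0 hx hy ↦ ?_
  have hlim := ((isNormal_iff_tendsto.1 hg ι x y h0 hx hy).const_sub (g y)).const_mul c
  rw [sub_self, mul_zero] at hlim
  refine tendsto_iff_norm_sub_tendsto_zero.2 <|
    squeeze_zero (fun _ ↦ norm_nonneg _) (fun i ↦ ?_) (tendsto_zero_iff_norm_tendsto_zero.1 hlim)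
  have hi : 0 ≤ y - x i := sub_nonneg.2 (hy.1 ⟨i, rfl⟩)
  rw [norm_sub_rev, ← map_sub, ← map_sub]
  exact CStarAlgebra.norm_le_norm_of_nonneg_of_le (map_nonneg f hi) (map_le_of_VNLE h hi)

lemma tendsto_map_conj (hf : VNIsNormal f.toLinearMap) {c : ℕ → ↥M} (hc : Antitone c)
    (hlim : SOTendsto c 0) (y : ↥M) : Tendsto (fun n ↦ f (star y * c n * y)) atTop (𝓝 0) := by
  have := tendsto_map_of_antitone hf (x := fun n ↦ star y * c n * y)
    (fun m n h ↦ star_left_conjugate_le_conjugate (hc h) y) ((hlim.const_mul _).mul_const y)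
  simpa using this

end Normal

section Finite

section Reflection

variable {A : Type*} [CStarAlgebra A]

lemma mul_star_mul_self_of_isStarProjection {s : A} (h : IsStarProjection (star s * s)) :
    s * (star s * s) = s := by
  rw [← sub_eq_zero, ← CStarRing.star_mul_self_eq_zero_iff]
  have hi := h.isIdempotentElem.eq
  simp only [star_sub, star_mul, star_star, sub_mul, mul_sub, mul_assoc] at hi ⊢
  simp only [hi, sub_self]

/-- If `s` and `s'` are partial isometries with the same initial projection and orthogonal ranges,
this is the self-adjoint unitary which exchanges `s` and `s'` and fixes the orthogonal complement
of their ranges. -/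
def swap (s s' : A) : A := 1 - (s - s') * star (s - s')

variable {s s' p : A}

lemma star_swap_mul_swap (hp : IsStarProjection p) (hs : star s * s = p) (hs' : star s' * s' = p)
    (h : star s * s' = 0) : star (swap s s') * swap s s' = 1 := by
  have h' : star s' * s = 0 := by simpa using congrArg star h
  have hsp := mul_star_mul_self_of_isStarProjection (hs ▸ hp)
  have hsp' := mul_star_mul_self_of_isStarProjection (hs' ▸ hp)
  have hdd : star (s - s') * (s - s') = (2 : ℕ) • p := by
    rw [star_sub, sub_mul, mul_sub, mul_sub, hs, hs', h, h']; abel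
  have hdp : (s - s') * p = s - s' := by
    rw [sub_mul]; nth_rw 1 [← hs]; rw [← hs', hsp, hsp']
  have hsq : swap s s' = 1 - (s - s') * star (s - s') := rfl
  generalize s - s' = d at hdd hdp hsq
  have hself : star (swap s s') = swap s s' := by simp [hsq]
  have : d * star d * (d * star d) = (2 : ℕ) • (d * star d) := by
    rw [mul_assoc, ← mul_assoc (star d), hdd, smul_mul_assoc, mul_smul_comm, ← mul_assoc, hdp]
  rw [hself, hsq, sub_mul, mul_sub, mul_sub, this]
  noncomm_ring

lemma star_mul_swap (hp : IsStarProjection p) (hs : star s * s = p) (hs' : star s' * s' = p)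
    (h : star s * s' = 0) : star s * swap s s' = star s' := by
  have hp_star {t : A} (ht : star t * t = p) : p * star t = star t := by
    have := congrArg star (mul_star_mul_self_of_isStarProjection (ht ▸ hp))
    rwa [star_mul, ht, hp.isSelfAdjoint.star_eq] at this
  rw [swap, mul_sub, ← mul_assoc, mul_sub, hs, h, sub_zero, star_sub, mul_sub, hp_star hs,
    hp_star hs']
  simp

lemma swap_mul_of_star_mul_eq_zero {t : A} (hs : star s * t = 0) (hs' : star s' * t = 0) :
    swap s s' * t = t := by
  rw [swap, sub_mul, mul_assoc, star_sub, sub_mul (star s), hs, hs']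
  simp

end Reflection

variable {H : Type} [NormedAddCommGroup H] [InnerProductSpace ℂ H] [CompleteSpace H]
  {M : VonNeumannAlgebra H} {E : ℕ → ↥M}

lemma mul_eq_right_of_antitone (hE : ∀ n, IsStarProjection (E n)) (hanti : Antitone E) {m n : ℕ}
    (h : m ≤ n) : E m * E n = E n :=
  ((hE n).le_iff_mul_eq_right (hE m)).1 (hanti h)

lemma mul_eq_left_of_antitone (hE : ∀ n, IsStarProjection (E n)) (hanti : Antitone E) {m n : ℕ}
    (h : m ≤ n) : E n * E m = E n :=
  ((hE n).le_iff_mul_eq_left (hE m)).1 (hanti h)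

/- The infinite product of the swaps of `s k` and `s (k + 1)` moves `s 0` off to infinity: it is an
isometry whose range is orthogonal to the range of `s 0`. -/
lemma exists_isometry_star_mul_eq_zero (hE : ∀ n, IsStarProjection (E n)) (hanti : Antitone E)
    (hE0 : SOTendsto E 0) {s : ℕ → ↥M} {p : ↥M} (hp : IsStarProjection p)
    (hs : ∀ k, star (s k) * s k = p) (hEs : ∀ k, E k * s k = s k)
    (hEs' : ∀ k, E (k + 1) * s k = 0) : ∃ v : ↥M, star v * v = 1 ∧ star (s 0) * v = 0 := by
  have horth (k : ℕ) : star (s k) * s (k + 1) = 0 := by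
    have := congrArg star (hEs' k)
    rw [star_mul, (hE _).isSelfAdjoint.star_eq, star_zero] at this
    rw [← hEs (k + 1), ← mul_assoc, this, zero_mul]
  have hsE {k n : ℕ} (h : n ≤ k) : star (s k) * (1 - E n) = 0 := by
    have : star (s k) * E n = star (s k) := by
      rw [← hEs k, star_mul, (hE k).isSelfAdjoint.star_eq, mul_assoc,
        mul_eq_left_of_antitone hE hanti h]
    rw [mul_sub, mul_one, this, sub_self]
  obtain ⟨a, ha0, ha⟩ : ∃ a : ℕ → ↥M, a 0 = 1 ∧ ∀ n, a (n + 1) = a n * swap (s n) (s (n + 1)) :=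
    ⟨fun n ↦ Nat.rec 1 (fun k b ↦ b * swap (s k) (s (k + 1))) n, rfl, fun _ ↦ rfl⟩
  have haa (n : ℕ) : star (a n) * a n = 1 := by
    induction n with
    | zero => simp [ha0]
    | succ n ih =>
      rw [ha, star_mul, mul_assoc, ← mul_assoc _ (a n), ih, one_mul,
        star_swap_mul_swap hp (hs n) (hs _) (horth n)]
  have hsa (n : ℕ) : star (s 0) * a n = star (s n) := by
    induction n with
    | zero => simp [ha0]
    | succ n ih => rw [ha, ← mul_assoc, ih, star_mul_swap hp (hs n) (hs _) (horth n)]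
  have hastable {m n : ℕ} (h : m ≤ n) : a n * (1 - E m) = a m * (1 - E m) := by
    induction n, h using Nat.le_induction with
    | base => rfl
    | succ n hmn ih =>
      rw [ha, mul_assoc, swap_mul_of_star_mul_eq_zero (hsE hmn) (hsE (by lia)), ih]
  have hlim : SOTendsto (fun n ↦ 1 - E n) 1 := by simpa using (SOTendsto.const 1).sub hE0
  have hiso (n : ℕ) (x : ↥M) : star (a n * x) * (a n * x) = star x * x := by
    rw [star_mul, mul_assoc, ← mul_assoc _ (a n), haa, one_mul]
  obtain ⟨v, hv⟩ := exists_sotendsto_of_star_mul_self_sub_eq (x := fun n ↦ a n * (1 - E n)) hlim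
    fun m n h ↦ by rw [← hastable h, ← mul_sub, hiso]
  refine ⟨v, ?_, (hv.const_mul _).eq_of_eventually_eq (.of_forall fun n ↦ ?_)⟩
  · simpa using hv.star_mul_self_eq hlim fun n ↦ hiso n _
  · rw [← mul_assoc, hsa, hsE le_rfl]

lemma eq_zero_of_finite_of_orthogonal (hfin : VNFinite M)
    (hE : ∀ n, IsStarProjection (E n)) (hanti : Antitone E)
    (hE0 : SOTendsto E 0) {s : ℕ → ↥M} {p : ↥M} (hp : IsStarProjection p)
    (hs : ∀ k, star (s k) * s k = p) (hEs : ∀ k, E k * s k = s k)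
    (hEs' : ∀ k, E (k + 1) * s k = 0) : p = 0 := by
  obtain ⟨v, hv, hsv⟩ := exists_isometry_star_mul_eq_zero hE hanti hE0 hp hs hEs hEs'
  have : star (s 0) = 0 := by rw [← mul_one (star (s 0)), ← hfin v hv, ← mul_assoc, hsv, zero_mul]
  rw [← hs 0, this, zero_mul]

end Finite

section Vanishing

lemma exists_strictMono_of_eventually {P : ℕ → ℕ → ℕ → Prop}
    (h : ∀ k m, ∀ᶠ n in atTop, P k m n) :
    ∃ φ : ℕ → ℕ, StrictMono φ ∧ ∀ k, P k (φ k) (φ (k + 1)) := by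
  choose ψ hlt hψ using fun k m ↦ ((eventually_gt_atTop m).and (h k m)).exists
  exact ⟨fun n ↦ Nat.rec 0 ψ n, strictMono_nat_of_lt_succ fun k ↦ hlt k _, fun k ↦ hψ k _⟩

variable {H : Type} [NormedAddCommGroup H] [InnerProductSpace ℂ H] [CompleteSpace H]
  {M : VonNeumannAlgebra H} {g : ↥M →ₚ[ℂ] ℂ} {E : ℕ → ↥M}

/- `p` is the limit of the projections obtained from `F` by passing successively to the right
supports of the `t k`; the `k`-th passage costs at most `δ k`. -/
lemma exists_isStarProjection_rightSupport_mul_eq (hg : VNIsNormal g.toLinearMap) {F : ↥M}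
    (hF : IsStarProjection F) {t : ℕ → ↥M} {δ : ℕ → ℝ} {c : ℝ}
    (hδ : ∀ n, ∑ k ∈ Finset.range n, δ k ≤ c)
    (h : ∀ k q, IsStarProjection q → q ≤ F → t k * q = 0 → (g q).re ≤ δ k) :
    ∃ p, IsStarProjection p ∧ (∀ k, rightSupport (t k * p) = p) ∧
      (g F).re - c ≤ (g p).re := by
  obtain ⟨P, hP0, hPs⟩ : ∃ P : ℕ → ↥M, P 0 = F ∧ ∀ n, P (n + 1) = rightSupport (t n * P n) :=
    ⟨fun n ↦ Nat.rec F (fun k b ↦ rightSupport (t k * b)) n, rfl, fun _ ↦ rfl⟩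
  have hP (n : ℕ) : IsStarProjection (P n) := by
    cases n with
    | zero => rwa [hP0]
    | succ n => exact hPs n ▸ isStarProjection_rightSupport _
  have hanti : Antitone P := antitone_nat_of_succ_le fun n ↦ hPs n ▸
    rightSupport_mul_le (t n) (hP n)
  have hcost (n : ℕ) : (g F).re - ∑ k ∈ Finset.range n, δ k ≤ (g (P n)).re := by
    induction n with
    | zero => simp [hP0]
    | succ n ih =>
      have hle := hanti n.le_succ
      have := h n (P n - P (n + 1)) (((hP _).le_iff_sub (hP n)).1 hle)
        ((sub_le_self _ (hP _).nonneg).trans (hP0 ▸ hanti n.zero_le))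
        (hPs n ▸ mul_sub_rightSupport_mul (t n) (hP n))
      rw [map_sub, Complex.sub_re] at this
      rw [Finset.sum_range_succ]
      linarith
  obtain ⟨p, hp, hpP, hlim⟩ := exists_isStarProjection_sotendsto hP hanti
  refine ⟨p, hp, fun k ↦ ?_, ?_⟩
  · have hle := rightSupport_mul_le (t k) hp
    have hmul (n : ℕ) : P n * (p - rightSupport (t k * p)) = p - rightSupport (t k * p) := by
      rw [mul_sub, (hp.le_iff_mul_eq_right (hP n)).1 (hpP n),
        ((isStarProjection_rightSupport _).le_iff_mul_eq_right (hP n)).1 (hle.trans (hpP n))]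
    have := rightSupport_mul_eq_zero (x := t k * P k) (t := p - rightSupport (t k * p))
      (by rw [mul_assoc, hmul, mul_sub_rightSupport_mul _ hp])
    rw [← hPs, hmul] at this
    exact (sub_eq_zero.1 this).symm
  · refine ge_of_tendsto' ((Complex.continuous_re.tendsto _).comp
      (tendsto_map_of_antitone hg hanti hlim)) fun n ↦ ?_
    rw [Function.comp_apply]
    linarith [hcost n, hδ n]

lemma le_of_mul_eq_self {A : Type*} [CStarAlgebra A] [PartialOrder A] [StarOrderedRing A] {q r : A}
    (hq : IsStarProjection q) (hr : 0 ≤ r) (h : r * q = q) : q ≤ r := by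
  have h' : q * r = q := by
    simpa [hr.isSelfAdjoint.star_eq, hq.isSelfAdjoint.star_eq] using congrArg star h
  have : r - q = star (1 - q) * r * (1 - q) := by
    rw [hq.one_sub.isSelfAdjoint.star_eq, sub_mul, one_mul, h', mul_sub, mul_one, sub_mul, h,
      hq.isIdempotentElem, sub_self, sub_zero]
  exact sub_nonneg.1 (this ▸ star_left_conjugate_nonneg hr _)

lemma eq_zero_of_finite_of_mul_eq (hfin : VNFinite M) (hg : VNIsNormal g.toLinearMap)
    (hgf : ∀ x, g (star x * x) = 0 → x = 0) (hE : ∀ n, IsStarProjection (E n))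
    (hanti : Antitone E) (hE0 : SOTendsto E 0) {w : ℕ → ↥M} {F : ↥M} (hF : IsStarProjection F)
    (hw : ∀ m, star (w m) * w m = F) (hEw : ∀ m, E m * w m = w m) : F = 0 := by
  refine eq_zero_of_re_map_nonpos hgf hF.nonneg (le_of_forall_pos_le_add fun ε hε ↦ ?_)
  rw [zero_add]
  obtain ⟨φ, hφ, hloss⟩ := exists_strictMono_of_eventually
    (P := fun k m n ↦ (g (star (w m) * E n * w m)).re ≤ ε / 2 * (1 / 2) ^ k) fun k m ↦
    ((Complex.continuous_re.tendsto _).comp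
      (tendsto_map_conj hg hanti hE0 (w m))).eventually_le_const
      (by rw [Complex.zero_re]; positivity)
  obtain ⟨p, hp, hsupp, hgp⟩ := exists_isStarProjection_rightSupport_mul_eq hg hF
    (t := fun k ↦ (1 - E (φ (k + 1))) * w (φ k)) (δ := fun k ↦ ε / 2 * (1 / 2) ^ k) (c := ε)
    (fun n ↦ by rw [← Finset.mul_sum]; nlinarith [sum_geometric_two_le n])
    (fun k q hq hqF htq ↦ by
      rw [sub_mul, one_mul, sub_mul, sub_eq_zero] at htq
      refine (re_map_le g (le_of_mul_eq_self hq
        (star_left_conjugate_nonneg (hE (φ (k + 1))).nonneg _) ?_)).trans (hloss k)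
      rw [mul_assoc, mul_assoc, ← mul_assoc (E _), ← htq, ← mul_assoc, hw,
        (hq.le_iff_mul_eq_right hF).1 hqF])
  have : p = 0 := by
    refine eq_zero_of_finite_of_orthogonal hfin (E := E ∘ φ) (fun k ↦ hE _)
      (hanti.comp_monotone hφ.monotone) (hE0.comp hφ.tendsto_atTop)
      (s := fun k ↦ phase ((1 - E (φ (k + 1))) * w (φ k) * p)) hp hsupp
      (fun k ↦ mul_phase_of_mul_eq ?_) (fun k ↦ mul_phase_eq_zero ?_)
    · rw [← mul_assoc, ← mul_assoc, Function.comp_apply, mul_sub, sub_mul, mul_one, hEw,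
        mul_eq_right_of_antitone hE hanti (hφ k.lt_succ_self).le, sub_mul 1, one_mul]
    · rw [← mul_assoc, ← mul_assoc, Function.comp_apply, (hE _).mul_one_sub_self, zero_mul,
        zero_mul]
  simpa [this] using hgp

lemma tendsto_toPreGNS_mul_of_antitone (hg : VNIsNormal g.toLinearMap)
    (hE : ∀ n, IsStarProjection (E n)) (hanti : Antitone E) (hE0 : SOTendsto E 0) (y : ↥M) :
    Tendsto (fun n ↦ ‖g.toPreGNS (E n * y)‖) atTop (𝓝 0) := by
  have h (n : ℕ) : ‖g.toPreGNS (E n * y)‖ ^ 2 = (g (star y * E n * y)).re := by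
    rw [← Complex.ofReal_re (‖_‖ ^ 2), norm_toPreGNS_sq, star_mul, (hE n).isSelfAdjoint.star_eq,
      mul_assoc, ← mul_assoc (E n), (hE n).isIdempotentElem, ← mul_assoc]
  have := ((Complex.continuous_re.tendsto _).comp (tendsto_map_conj hg hanti hE0 y)).sqrt
  simpa [← h, Function.comp_def] using this

lemma exists_sub_mul_eq_smul (hE : ∀ n, IsStarProjection (E n)) (hanti : Antitone E) {x : ℕ → ↥M}
    (hx : ∀ k, ‖x k‖ ≤ 1) (hEx : ∀ k, (E k - E (k + 1)) * x k = x k) :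
    ∃ Y, ∀ k, (E k - E (k + 1)) * Y = ((1 / 2 : ℝ) ^ k) • x k := by
  have horth {j k : ℕ} (h : j ≠ k) : (E k - E (k + 1)) * x j = 0 := by
    rw [← hEx j, ← mul_assoc]
    convert zero_mul (x j)
    simp only [mul_sub, sub_mul]
    rcases h.lt_or_gt with h | h
    · simp only [mul_eq_left_of_antitone hE hanti, h.le, Nat.succ_le_of_lt, h,
        h.le.trans k.le_succ, Nat.succ_le_succ, sub_self]
    · simp only [mul_eq_right_of_antitone hE hanti, h.le, Nat.succ_le_of_lt, h,
        h.le.trans j.le_succ, Nat.succ_le_succ, sub_self]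
  have hsum : Summable fun k ↦ ((1 / 2 : ℝ) ^ k) • x k :=
    .of_norm_bounded summable_geometric_two fun k ↦ by
      rw [norm_smul, Real.norm_of_nonneg (by positivity)]
      exact mul_le_of_le_one_right (by positivity) (hx k)
  refine ⟨∑' k, ((1 / 2 : ℝ) ^ k) • x k, fun k ↦ ?_⟩
  rw [← hsum.tsum_mul_left, tsum_eq_single k fun j hj ↦ by rw [mul_smul_comm, horth hj, smul_zero],
    mul_smul_comm, hEx]

lemma exists_norm_toPreGNS_lt_of_orthogonal (hfin : VNFinite M) (hg : VNIsNormal g.toLinearMap)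
    (hgf : ∀ x, g (star x * x) = 0 → x = 0) (hE : ∀ n, IsStarProjection (E n))
    (hanti : Antitone E) (hE0 : SOTendsto E 0) {x : ℕ → ↥M} (hx : ∀ k, ‖x k‖ ≤ 1)
    (hEx : ∀ k, (E k - E (k + 1)) * x k = x k) {ε : ℝ} (hε : 0 < ε) :
    ∃ k, ‖g.toPreGNS (x k)‖ < ε := by
  by_contra! hlow
  obtain ⟨Y, hY⟩ := exists_sub_mul_eq_smul hE hanti hx hEx
  set P : ℕ → ↥M := fun k ↦ rightSupport (E k * Y)
  have hP (k : ℕ) : IsStarProjection (P k) := isStarProjection_rightSupport _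
  have hEYP (k : ℕ) : E k * Y * P k = E k * Y := mul_rightSupport _
  have hPanti : Antitone P := fun m n h ↦ rightSupport_le (hP m) <| by
    rw [← mul_eq_left_of_antitone hE hanti h, mul_assoc (E n), mul_assoc (E n), hEYP]
  have hxP (k : ℕ) : x k * P k = x k := by
    have : (E k - E (k + 1)) * (E k * Y) = (E k - E (k + 1)) * Y := by
      rw [← mul_assoc, sub_mul, (hE k).isIdempotentElem,
        mul_eq_left_of_antitone hE hanti k.le_succ]
    rw [← inv_smul_smul₀ (pow_ne_zero k (by norm_num : (1 / 2 : ℝ) ≠ 0)) (x k), ← hY,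
      smul_mul_assoc, ← this, mul_assoc _ _ (P k), hEYP]
  obtain ⟨F, hF, hle, hlim⟩ := exists_isStarProjection_sotendsto hP hPanti
  have hF0 : F = 0 := eq_zero_of_finite_of_mul_eq hfin hg hgf hE hanti hE0
    (w := fun m ↦ phase (E m * Y) * F) hF
    (fun m ↦ by
      have : star (phase (E m * Y)) * phase (E m * Y) * F = F :=
        (hF.le_iff_mul_eq_right (hP m)).1 (hle m)
      rw [star_mul, mul_assoc, ← mul_assoc (star (phase _)), this, hF.isSelfAdjoint.star_eq,
        hF.isIdempotentElem])
    (fun m ↦ by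
      rw [← mul_assoc, mul_phase_of_mul_eq (by rw [← mul_assoc, (hE m).isIdempotentElem])])
  refine hε.not_ge (ge_of_tendsto' (tendsto_toPreGNS_mul_of_antitone hg hP hPanti (hF0 ▸ hlim) 1)
    fun k ↦ (hlow k).trans ?_)
  rw [mul_one, ← hxP k]
  exact norm_toPreGNS_mul_le_of_norm_le_one (hx k) _

lemma exists_forall_norm_toPreGNS_mul_lt (hfin : VNFinite M) (hg : VNIsNormal g.toLinearMap)
    (hgf : ∀ x, g (star x * x) = 0 → x = 0) (hE : ∀ n, IsStarProjection (E n))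
    (hanti : Antitone E) (hE0 : SOTendsto E 0) {ε : ℝ} (hε : 0 < ε) :
    ∃ n, ∀ y : ↥M, ‖y‖ ≤ 1 → ‖g.toPreGNS (E n * y)‖ < ε := by
  by_contra! h
  choose y hy hyε using h
  obtain ⟨φ, hφ, hsmall⟩ := exists_strictMono_of_eventually
    (P := fun _ m n ↦ ‖g.toPreGNS (E n * y m)‖ < ε / 2) fun _ m ↦
    (tendsto_toPreGNS_mul_of_antitone hg hE hanti hE0 (y m)).eventually_lt_const (half_pos hε)
  have hproj (k : ℕ) : IsStarProjection (E (φ k) - E (φ (k + 1))) :=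
    ((hE _).le_iff_sub (hE _)).1 (hanti (hφ k.lt_succ_self).le)
  obtain ⟨k, hk⟩ := exists_norm_toPreGNS_lt_of_orthogonal hfin hg hgf (E := E ∘ φ)
    (fun k ↦ hE _) (hanti.comp_monotone hφ.monotone) (hE0.comp hφ.tendsto_atTop)
    (x := fun k ↦ (E (φ k) - E (φ (k + 1))) * y (φ k))
    (fun k ↦ (norm_mul_le _ _).trans (mul_le_one₀ (hproj k).norm_le (norm_nonneg _) (hy _)))
    (fun k ↦ by rw [← mul_assoc, Function.comp_apply, Function.comp_apply,
      (hproj k).isIdempotentElem]) (half_pos hε)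
  have := hyε (φ k)
  rw [sub_mul, map_sub] at hk
  linarith [hsmall k, norm_sub_norm_le (g.toPreGNS (E (φ k) * y (φ k)))
    (g.toPreGNS (E (φ (k + 1)) * y (φ k)))]

end Vanishing

section Truncation

variable {A : Type*} [CStarAlgebra A]

/-- The functional calculus `a ↦ (a - r)₊`, which cuts off the part of the spectrum in
`(-∞, r]`. -/
noncomputable def cutoff (r : ℝ) (a : A) : A := cfc (fun t : ℝ ↦ max (t - r) 0) a

lemma exists_cutoff_mul_one_sub_mul_eq_zero {a : A} (ha : IsSelfAdjoint a) {r : ℝ} (hr : 0 < r) :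
    ∃ k, cutoff r a * (1 - k * a) = 0 := by
  have hinv : ContinuousOn (fun t : ℝ ↦ (max t r)⁻¹) (spectrum ℝ a) :=
    ContinuousOn.inv₀ (by fun_prop) fun t _ ↦ (hr.trans_le (le_max_right _ _)).ne'
  have hmul : ContinuousOn (fun t : ℝ ↦ (max t r)⁻¹ * t) (spectrum ℝ a) := hinv.mul continuousOn_id
  refine ⟨cfc (fun t : ℝ ↦ (max t r)⁻¹) a, ?_⟩
  nth_rw 3 [← cfc_id' ℝ a]
  rw [cutoff, ← cfc_mul _ _ _ hinv (by fun_prop), ← cfc_const_one ℝ a,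
    ← cfc_sub _ _ _ (by fun_prop) hmul,
    ← cfc_mul _ (fun t : ℝ ↦ 1 - (max t r)⁻¹ * t) _ (by fun_prop) (continuousOn_const.sub hmul),
    ← cfc_zero ℝ a]
  refine cfc_congr fun t _ ↦ ?_
  rcases le_total t r with ht | ht
  · simp [ht]
  · simp [ht, (hr.trans_le ht).ne']

variable [PartialOrder A] [StarOrderedRing A]

lemma cutoff_nonneg (r : ℝ) (a : A) : 0 ≤ cutoff r a := cfc_nonneg fun _ _ ↦ le_max_right _ _

lemma cutoff_le_cutoff {r s : ℝ} (h : r ≤ s) (a : A) : cutoff s a ≤ cutoff r a :=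
  cfc_mono (fun t _ ↦ max_le_max_right 0 (sub_le_sub_left h t)) (by fun_prop) (by fun_prop)

lemma norm_sub_cutoff_le {a : A} (ha : 0 ≤ a) {r : ℝ} (hr : 0 ≤ r) : ‖a - cutoff r a‖ ≤ r := by
  nth_rw 1 [← cfc_id' ℝ a]
  rw [cutoff, ← cfc_sub _ _ _ (by fun_prop) (by fun_prop)]
  refine norm_cfc_le hr fun t ht ↦ ?_
  have := spectrum_nonneg_of_nonneg ha ht
  rw [Real.norm_eq_abs, abs_le]
  grind

end Truncation

section Egorov

variable {H : Type} [NormedAddCommGroup H] [InnerProductSpace ℂ H] [CompleteSpace H]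
  {M : VonNeumannAlgebra H} {f g : ↥M →ₚ[ℂ] ℂ}

lemma exists_shrink_le_of_monotone (hg : VNIsNormal g.toLinearMap) {S : ℕ → ↥M} (h0 : ∀ N, 0 ≤ S N)
    (hS : Monotone S) {r : ℝ} (hr : ∀ N, (g (S N)).re ≤ r) :
    ∃ c : ↥M, SOTendsto (fun N ↦ shrink (S N)) c ∧ (g c).re ≤ r := by
  have hanti : Antitone fun N ↦ 1 - shrink (S N) := fun m n h ↦
    sub_le_sub_left (shrink_le_shrink (h0 m) (hS h)) 1
  obtain ⟨y, -, -, hy⟩ := exists_sotendsto_of_antitone hanti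
    fun N ↦ sub_nonneg.2 (shrink_le_one (h0 N))
  refine ⟨1 - y, by simpa using (SOTendsto.const 1).sub hy, ?_⟩
  have := (tendsto_map_of_antitone hg hanti hy).const_sub (g 1)
  simp only [← map_sub, sub_sub_cancel] at this
  exact le_of_tendsto' ((Complex.continuous_re.tendsto _).comp this) fun N ↦
    (re_map_le g (shrink_le_self (h0 N))).trans (hr N)

/- `c n` is the supremum of the operators `shrink (d n + ⋯ + d N)`. -/
lemma exists_antitone_shrink_le (hg : VNIsNormal g.toLinearMap)
    (hgf : ∀ x, g (star x * x) = 0 → x = 0) {d : ℕ → ↥M} (hd : ∀ k, 0 ≤ d k)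
    (hgd : ∀ k, (g (d k)).re ≤ (1 / 2) ^ k) :
    ∃ c : ℕ → ↥M, Antitone c ∧ SOTendsto c 0 ∧ (∀ n, c n ≤ 1) ∧
      ∀ n k, n ≤ k → shrink (d k) ≤ c n := by
  set S : ℕ → ℕ → ↥M := fun n N ↦ ∑ k ∈ Finset.Ico n N, d k
  have hS0 (n N : ℕ) : 0 ≤ S n N := Finset.sum_nonneg fun k _ ↦ hd k
  have hSmono (n : ℕ) : Monotone (S n) := fun N N' h ↦
    Finset.sum_le_sum_of_subset_of_nonneg (Finset.Ico_subset_Ico_right h) fun k _ _ ↦ hd k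
  have hgS (n N : ℕ) : (g (S n N)).re ≤ 2 * (1 / 2) ^ n := by
    rw [map_sum, Complex.re_sum]
    refine (Finset.sum_le_sum fun k _ ↦ hgd k).trans
      ((geom_sum_Ico_le_of_lt_one (by norm_num) (by norm_num)).trans_eq ?_)
    ring
  choose c hc hgc using fun n ↦ exists_shrink_le_of_monotone hg (hS0 n) (hSmono n) (hgS n)
  have hle (n k : ℕ) (h : n ≤ k) : shrink (d k) ≤ c n :=
    (SOTendsto.const _).le (hc n) <| (eventually_gt_atTop k).mono fun N hN ↦
      shrink_le_shrink (hd k) <| Finset.single_le_sum (fun j _ ↦ hd j) (Finset.mem_Ico.2 ⟨h, hN⟩)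
  have hc0 (n : ℕ) : 0 ≤ c n := (hc n).nonneg (.of_forall fun N ↦ shrink_nonneg (hS0 n N))
  have hanti : Antitone c := fun m n h ↦ (hc n).le (hc m) <| .of_forall fun N ↦
    shrink_le_shrink (hS0 n N) <| Finset.sum_le_sum_of_subset_of_nonneg
      (Finset.Ico_subset_Ico_left h) fun k _ _ ↦ hd k
  obtain ⟨c', hc'0, hc'le, hlim⟩ := exists_sotendsto_of_antitone hanti hc0
  have hpow : Tendsto (fun n ↦ 2 * (1 / 2 : ℝ) ^ n) atTop (𝓝 0) := by
    simpa using (tendsto_pow_atTop_nhds_zero_of_lt_one (r := (1 / 2 : ℝ)) (by norm_num)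
      (by norm_num)).const_mul 2
  have hc' : c' = 0 := eq_zero_of_re_map_nonpos hgf hc'0 <|
    ge_of_tendsto' hpow fun n ↦ (re_map_le g (hc'le n)).trans (hgc n)
  exact ⟨c, hanti, hc' ▸ hlim, fun n ↦ (hc n).le (.const 1) <|
    Eventually.of_forall fun N ↦ shrink_le_one (hS0 n N), hle⟩

lemma tendsto_toPreGNS_mul_of_bounded (hf : VNIsNormal f.toLinearMap)
    (hg : VNIsNormal g.toLinearMap) (hgf : ∀ x, g (star x * x) = 0 → x = 0) {x : ℕ → ↥M}
    (hx : ∀ n, ‖x n‖ ≤ 1) (hgx : Tendsto (fun n ↦ ‖g.toPreGNS (x n)‖) atTop (𝓝 0)) (y : ↥M) :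
    Tendsto (fun n ↦ ‖f.toPreGNS (x n * y)‖) atTop (𝓝 0) := by
  refine tendsto_of_subseq_tendsto fun ns hns ↦ ?_
  obtain ⟨φ, -, hφ⟩ := extraction_forall_of_eventually
    (P := fun k n ↦ ‖g.toPreGNS (x (ns n))‖ ^ 2 ≤ (1 / 2) ^ k) fun k ↦
    ((hgx.comp hns).pow 2).eventually_le_const (by rw [zero_pow two_ne_zero]; positivity)
  refine ⟨φ, ?_⟩
  set z : ℕ → ↥M := x ∘ ns ∘ φ
  obtain ⟨c, hanti, hc0, -, hle⟩ := exists_antitone_shrink_le hg hgf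
    (d := fun k ↦ star (z k) * z k) (fun k ↦ star_mul_self_nonneg _) fun k ↦ by
      rw [← norm_toPreGNS_sq, Complex.ofReal_re]; exact hφ k
  have hzc (k : ℕ) : star (z k) * z k ≤ c k + c k :=
    (le_two_smul_shrink (star_mul_self_nonneg _) (star_mul_self_le_one (hx _))).trans <| by
      rw [two_smul]; exact add_le_add (hle k k le_rfl) (hle k k le_rfl)
  have hsq (k : ℕ) : ‖f.toPreGNS (z k * y)‖ ^ 2 ≤ (f (star y * (c k + c k) * y)).re := by
    rw [← Complex.ofReal_re (‖_‖ ^ 2), norm_toPreGNS_sq, star_mul, mul_assoc, ← mul_assoc (star _),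
      ← mul_assoc]
    exact re_map_le f (star_left_conjugate_le_conjugate (hzc k) y)
  have hlim : Tendsto (fun k ↦ (f (star y * (c k + c k) * y)).re) atTop (𝓝 0) := by
    simpa [mul_add, add_mul, Function.comp_def] using (Complex.continuous_re.tendsto _).comp
      ((tendsto_map_conj hf hanti hc0 y).add (tendsto_map_conj hf hanti hc0 y))
  exact squeeze_zero (fun _ ↦ norm_nonneg _) (fun k ↦ Real.le_sqrt_of_sq_le (hsq k))
    (by simpa using hlim.sqrt)

lemma exists_antitone_isStarProjection_one_sub_eq_mul {h : ↥M} (h0 : 0 ≤ h)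
    (hinj : ∀ t, h * t = 0 → t = 0) :
    ∃ E : ℕ → ↥M, (∀ n, IsStarProjection (E n)) ∧ Antitone E ∧ SOTendsto E 0 ∧
      ∀ n, ∃ k, 1 - E n = k * h := by
  have hr (n : ℕ) : (0 : ℝ) < (1 / 2) ^ n := by positivity
  set b : ℕ → ↥M := fun n ↦ cutoff ((1 / 2) ^ n) h
  have hE (n : ℕ) : IsStarProjection (1 - rightSupport (b n)) :=
    (isStarProjection_rightSupport _).one_sub
  have hbE (n : ℕ) : b n * (1 - rightSupport (b n)) = 0 := by
    rw [mul_sub, mul_one, mul_rightSupport, sub_self]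
  have hb : Monotone b := fun m n hmn ↦
    cutoff_le_cutoff (pow_le_pow_of_le_one (by norm_num) (by norm_num) hmn) h
  have hanti : Antitone fun n ↦ 1 - rightSupport (b n) := fun m n hmn ↦
    sub_le_sub_left (rightSupport_le (isStarProjection_rightSupport _) (by
      rw [eq_comm, ← sub_eq_zero, ← mul_one_sub]
      exact mul_eq_zero_of_le (cutoff_nonneg _ h) (hb hmn) (hbE n))) 1
  obtain ⟨F, hF, hFle, hlim⟩ := exists_isStarProjection_sotendsto hE hanti
  have hhF (n : ℕ) : ‖h * F‖ ≤ (1 / 2) ^ n := by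
    have hbF : b n * F = 0 := by
      rw [← (hF.le_iff_mul_eq_right (hE n)).1 (hFle n), ← mul_assoc, hbE, zero_mul]
    rw [← sub_zero (h * F), ← hbF, ← sub_mul]
    exact (norm_mul_le _ _).trans ((mul_le_of_le_one_right (norm_nonneg _) hF.norm_le).trans
      (norm_sub_cutoff_le h0 (hr n).le))
  have hF0 : F = 0 := hinj F <| norm_le_zero_iff.1 <|
    ge_of_tendsto' (tendsto_pow_atTop_nhds_zero_of_lt_one (by norm_num) (by norm_num)) hhF
  refine ⟨_, hE, hanti, hF0 ▸ hlim, fun n ↦ ?_⟩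
  obtain ⟨k, hk⟩ := exists_cutoff_mul_one_sub_mul_eq_zero h0.isSelfAdjoint (hr n)
  refine ⟨rightSupport (b n) * k, ?_⟩
  rw [sub_sub_cancel, mul_assoc, ← sub_eq_zero, ← mul_one_sub]
  exact rightSupport_mul_eq_zero hk

lemma exists_nonneg_norm_mul_le (hg : VNIsNormal g.toLinearMap)
    (hgf : ∀ x, g (star x * x) = 0 → x = 0) {x : ℕ → ↥M}
    (hx : ∀ k, (g (x k * star (x k))).re ≤ (1 / 8) ^ k) :
    ∃ s : ℕ → ↥M, (∀ n, 0 ≤ s n) ∧ (∀ n, ‖s n‖ ≤ 1) ∧ SOTendsto s 1 ∧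
      ∀ n k, n ≤ k → ‖s n * x k‖ ≤ (1 / 2) ^ k := by
  set z : ℕ → ↥M := fun k ↦ ((2 : ℂ) ^ k) • x k
  have hgz (k : ℕ) : (g (z k * star (z k))).re ≤ (1 / 2) ^ k := by
    have hzz : z k * star (z k) = (((4 : ℝ) ^ k : ℝ) : ℂ) • (x k * star (x k)) := by
      simp only [z, star_smul, smul_mul_smul_comm, ← mul_pow, Complex.star_def, map_pow,
        Complex.conj_ofNat]
      norm_num
    rw [hzz, map_smul, smul_eq_mul, Complex.re_ofReal_mul]
    refine (mul_le_mul_of_nonneg_left (hx k) (by positivity)).trans_eq ?_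
    rw [← mul_pow]
    norm_num
  obtain ⟨c, -, hc0, hc1, hle⟩ := exists_antitone_shrink_le hg hgf
    (d := fun k ↦ z k * star (z k)) (fun k ↦ mul_star_self_nonneg _) hgz
  have hs0 (n : ℕ) : 0 ≤ 1 - c n := sub_nonneg.2 (hc1 n)
  refine ⟨fun n ↦ 1 - c n, hs0, fun n ↦ ?_, by simpa using (SOTendsto.const 1).sub hc0,
    fun n k hnk ↦ ?_⟩
  · exact (CStarAlgebra.norm_le_one_iff_of_nonneg _ (hs0 n)).2 <| sub_le_self 1 <|
      (shrink_nonneg (mul_star_self_nonneg (z n))).trans (hle n n le_rfl)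
  · have h2 : ‖(2 : ℂ) ^ k‖ * ‖(1 - c n) * x k‖ ≤ 1 := by
      rw [← norm_smul, ← mul_smul_comm]
      exact norm_mul_le_one_of_le_one_sub_shrink (hs0 n) (sub_le_sub_left (hle n k hnk) 1)
    rw [norm_pow, Complex.norm_ofNat] at h2
    rwa [one_div, inv_pow, ← one_div, le_div_iff₀' (by positivity)]

lemma exists_nonneg_tendsto_mul (hg : VNIsNormal g.toLinearMap)
    (hgf : ∀ x, g (star x * x) = 0 → x = 0) {x : ℕ → ↥M}
    (hx : ∀ k, (g (x k * star (x k))).re ≤ (1 / 8) ^ k) (hx1 : ∀ k, ‖x k‖ ≤ 1) :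
    ∃ h : ↥M, 0 ≤ h ∧ (∀ t, h * t = 0 → t = 0) ∧ Tendsto (fun k ↦ h * x k) atTop (𝓝 0) := by
  obtain ⟨s, hs0, hs1, hs, hsx⟩ := exists_nonneg_norm_mul_le hg hgf hx
  have hbound (n : ℕ) : ‖((1 / 2 : ℝ) ^ n) • s n‖ ≤ (1 / 2) ^ n := by
    rw [norm_smul, Real.norm_of_nonneg (by positivity)]
    exact mul_le_of_le_one_right (by positivity) (hs1 n)
  have hpos (n : ℕ) : 0 ≤ ((1 / 2 : ℝ) ^ n) • s n := smul_nonneg (by positivity) (hs0 n)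
  have hsum : Summable fun n ↦ ((1 / 2 : ℝ) ^ n) • s n :=
    .of_norm_bounded summable_geometric_two hbound
  refine ⟨∑' n, ((1 / 2 : ℝ) ^ n) • s n, tsum_nonneg hpos, fun t ht ↦ ?_, ?_⟩
  · have hst (n : ℕ) : s n * t = 0 := by
      have := mul_eq_zero_of_le (hpos n) (hsum.le_tsum n fun m _ ↦ hpos m) ht
      rwa [smul_mul_assoc, smul_eq_zero_iff_right (by positivity)] at this
    simpa using (hs.mul_const t).eq_of_eventually_eq (.of_forall hst)
  · simp only [← hsum.tsum_mul_right]
    rw [← tsum_zero (α := ↥M) (β := ℕ)]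
    refine tendsto_tsum_of_dominated_convergence summable_geometric_two (fun n ↦ ?_)
      (.of_forall fun k n ↦ (norm_mul_le _ _).trans
        ((mul_le_of_le_one_right (norm_nonneg _) (hx1 k)).trans (hbound n)))
    simp only [smul_mul_assoc]
    have := squeeze_zero_norm' ((eventually_ge_atTop n).mono (hsx n))
      (tendsto_pow_atTop_nhds_zero_of_lt_one (by norm_num) (by norm_num))
    simpa using this.const_smul ((1 / 2 : ℝ) ^ n)

lemma tendsto_toPreGNS_of_tendsto_star (hfin : VNFinite M) (hg : VNIsNormal g.toLinearMap)
    (hgf : ∀ x, g (star x * x) = 0 → x = 0) {x : ℕ → ↥M} (hx : ∀ k, ‖x k‖ ≤ 1)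
    (hgx : Tendsto (fun k ↦ ‖g.toPreGNS (star (x k))‖) atTop (𝓝 0)) :
    Tendsto (fun k ↦ ‖g.toPreGNS (x k)‖) atTop (𝓝 0) := by
  refine tendsto_of_subseq_tendsto fun ns hns ↦ ?_
  obtain ⟨φ, -, hφ⟩ := extraction_forall_of_eventually
    (P := fun k n ↦ ‖g.toPreGNS (star (x (ns n)))‖ ^ 2 ≤ (1 / 8) ^ k) fun k ↦
    ((hgx.comp hns).pow 2).eventually_le_const (by rw [zero_pow two_ne_zero]; positivity)
  set z : ℕ → ↥M := x ∘ ns ∘ φ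
  obtain ⟨h, h0, hinj, hlim⟩ := exists_nonneg_tendsto_mul (x := z) hg hgf (fun k ↦ by
    simpa only [star_star, Complex.ofReal_re] using
      (congrArg Complex.re (norm_toPreGNS_sq (f := g) (star (z k)))).ge.trans (hφ k)) fun _ ↦ hx _
  obtain ⟨E, hE, hanti, hE0, hk⟩ := exists_antitone_isStarProjection_one_sub_eq_mul h0 hinj
  refine ⟨φ, Metric.tendsto_atTop.2 fun ε hε ↦ ?_⟩
  obtain ⟨n, hn⟩ := exists_forall_norm_toPreGNS_mul_lt hfin hg hgf hE hanti hE0 (half_pos hε)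
  obtain ⟨k, hk⟩ := hk n
  have htail : Tendsto (fun j ↦ ‖k‖ * ‖h * z j‖ * ‖g.toPreGNS 1‖) atTop (𝓝 0) := by
    simpa using (hlim.norm.const_mul ‖k‖).mul_const ‖g.toPreGNS 1‖
  obtain ⟨N, hN⟩ := eventually_atTop.1 (htail.eventually_lt_const (half_pos hε))
  refine ⟨N, fun j hj ↦ ?_⟩
  have hsplit : z j = E n * z j + k * (h * z j) * 1 := by
    rw [mul_one, ← mul_assoc, ← hk, ← add_mul, add_sub_cancel, one_mul]
  rw [dist_zero_right, norm_norm]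
  calc ‖g.toPreGNS (z j)‖ ≤ ‖g.toPreGNS (E n * z j)‖ + ‖g.toPreGNS (k * (h * z j) * 1)‖ := by
        conv_lhs => rw [hsplit, map_add]
        exact norm_add_le _ _
    _ ≤ ‖g.toPreGNS (E n * z j)‖ + ‖k‖ * ‖h * z j‖ * ‖g.toPreGNS 1‖ := by
        gcongr
        exact (norm_toPreGNS_mul_le _ _).trans (by gcongr; exact norm_mul_le _ _)
    _ < ε / 2 + ε / 2 := add_lt_add (hn _ (hx _)) (hN j hj)
    _ = ε := add_halves ε

end Egorov

section Contraction

variable {B : Type*} [CStarAlgebra B] [PartialOrder B] [StarOrderedRing B]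

lemma sub_pow_succ_le_smul {T : B} (h0 : 0 ≤ T) (h1 : T ≤ 1) (n : ℕ) :
    T - T ^ (n + 1) ≤ (n : ℂ) • (1 - T) := by
  have hstep (k : ℕ) : T ^ k * (1 - T) ≤ 1 - T := by
    have hcomm : Commute (1 - T ^ k) (1 - T) :=
      ((Commute.one_right _).sub_right ((Commute.one_left _).sub_left (Commute.pow_self T k)))
    have := hcomm.mul_nonneg (sub_nonneg.2 <| (CStarAlgebra.pow_antitone h0 h1 k.zero_le).trans_eq
      (pow_zero T)) (sub_nonneg.2 h1)
    rwa [sub_mul, one_mul, sub_nonneg] at this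
  induction n with
  | zero => simp
  | succ n ih =>
    calc T - T ^ (n + 1 + 1) = (T - T ^ (n + 1)) + T ^ (n + 1) * (1 - T) := by
          rw [mul_sub, mul_one, ← pow_succ]; abel
      _ ≤ (n : ℂ) • (1 - T) + (1 - T) := add_le_add ih (hstep _)
      _ = ((n + 1 : ℕ) : ℂ) • (1 - T) := by push_cast; rw [add_smul, one_smul]

lemma tendsto_pow_apply_of_forall_fixed_eq_zero {K : Type*} [NormedAddCommGroup K]
    [InnerProductSpace ℂ K] [CompleteSpace K] {T : K →L[ℂ] K} (h0 : 0 ≤ T) (h1 : T ≤ 1)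
    (hfix : ∀ η, T η = η → η = 0) (ζ : K) : Tendsto (fun n ↦ (T ^ n) ζ) atTop (𝓝 0) := by
  obtain ⟨b, hb⟩ := exists_tendsto_apply_of_antitone (CStarAlgebra.pow_antitone h0 h1)
    (CStarAlgebra.pow_nonneg h0)
  have hfixed : T (b ζ) = b ζ := by
    refine tendsto_nhds_unique ((T.continuous.tendsto _).comp (hb ζ)) <|
      ((hb ζ).comp (tendsto_add_atTop_nat 1)).congr fun n ↦ ?_
    simp only [Function.comp_apply, pow_succ', mul_apply_eq_comp]
  simpa only [hfix _ hfixed] using hb ζ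

end Contraction

section GNS

variable {A : Type*} [CStarAlgebra A] [PartialOrder A] [StarOrderedRing A] {f g h : A →ₚ[ℂ] ℂ}

/-- The canonical map from a C⋆-algebra to the completed GNS space of a positive functional. -/
noncomputable def gnsVec (h : A →ₚ[ℂ] ℂ) : A →ₗ[ℂ] h.GNS :=
  (UniformSpace.Completion.toComplL (𝕜 := ℂ)).toLinearMap ∘ₗ h.toPreGNS.toLinearMap

lemma norm_gnsVec (x : A) : ‖gnsVec h x‖ = ‖h.toPreGNS x‖ := UniformSpace.Completion.norm_coe _

lemma inner_gnsVec_gnsVec (x y : A) : inner ℂ (gnsVec h x) (gnsVec h y) = h (star x * y) :=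
  UniformSpace.Completion.inner_coe _ _

lemma gnsStarAlgHom_gnsVec (a x : A) : h.gnsStarAlgHom a (gnsVec h x) = gnsVec h (a * x) :=
  h.gnsNonUnitalStarAlgHom_apply_coe

lemma denseRange_gnsVec : DenseRange (gnsVec h) :=
  UniformSpace.Completion.denseRange_coe.comp h.toPreGNS.surjective.denseRange
    (UniformSpace.Completion.continuous_coe _)

lemma exists_tendsto_gnsVec (η : h.GNS) :
    ∃ z : ℕ → A, Tendsto (fun k ↦ gnsVec h (z k)) atTop (𝓝 η) := by
  obtain ⟨v, hv, hlim⟩ := mem_closure_iff_seq_limit.1 (denseRange_gnsVec (h := h) η)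
  choose z hz using hv
  exact ⟨z, by simpa only [hz] using hlim⟩

lemma inner_gnsVec_gnsStarAlgHom (a x : A) (η : h.GNS) :
    inner ℂ (gnsVec h x) (h.gnsStarAlgHom a η) = inner ℂ (gnsVec h (star a * x)) η := by
  rw [← gnsStarAlgHom_gnsVec, map_star, ContinuousLinearMap.star_eq_adjoint,
    ContinuousLinearMap.adjoint_inner_left]

lemma eq_of_forall_inner_gnsVec_eq {η ξ : h.GNS}
    (hηξ : ∀ x, inner ℂ (gnsVec h x) η = inner ℂ (gnsVec h x) ξ) : η = ξ :=
  ext_inner_left ℂ fun v ↦ congrFun (denseRange_gnsVec.equalizer (f := gnsVec h)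
    (g := fun v ↦ inner ℂ v η) (h := fun v ↦ inner ℂ v ξ) (by fun_prop) (by fun_prop)
    (funext hηξ)) v

lemma eq_of_forall_inner_gnsVec_apply_eq {S T : h.GNS →L[ℂ] h.GNS}
    (hST : ∀ x y, inner ℂ (gnsVec h x) (S (gnsVec h y)) = inner ℂ (gnsVec h x) (T (gnsVec h y))) :
    S = T :=
  DFunLike.ext' <| denseRange_gnsVec.equalizer S.continuous T.continuous <|
    funext fun y ↦ eq_of_forall_inner_gnsVec_eq fun x ↦ hST x y

lemma tendsto_gnsVec_zero {x : ℕ → A} (hx : Tendsto (fun k ↦ ‖h.toPreGNS (x k)‖) atTop (𝓝 0)) :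
    Tendsto (fun k ↦ gnsVec h (x k)) atTop (𝓝 0) :=
  tendsto_zero_iff_norm_tendsto_zero.2 <| by simpa only [norm_gnsVec] using hx

lemma eq_zero_of_tendsto_gnsVec_of_tendsto_mul {z b : ℕ → A} {η : h.GNS}
    (hz : Tendsto (fun k ↦ gnsVec h (z k)) atTop (𝓝 η)) (hb : ∀ k, IsSelfAdjoint (b k))
    (h1b : ∀ y, Tendsto (fun k ↦ ‖h.toPreGNS ((1 - b k) * y)‖) atTop (𝓝 0))
    (hbz : Tendsto (fun k ↦ ‖h.toPreGNS (b k * z k)‖) atTop (𝓝 0)) : η = 0 := by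
  refine eq_of_forall_inner_gnsVec_eq fun y ↦ ?_
  have hsplit (k : ℕ) : inner ℂ (gnsVec h ((1 - b k) * y)) (gnsVec h (z k)) +
      inner ℂ (gnsVec h y) (gnsVec h (b k * z k)) = inner ℂ (gnsVec h y) (gnsVec h (z k)) := by
    simp only [inner_gnsVec_gnsVec, ← map_add, star_mul, star_sub, star_one, (hb k).star_eq]
    congr 1
    noncomm_ring
  have hlim : Tendsto (fun k ↦ inner ℂ (gnsVec h y) (gnsVec h (z k))) atTop
      (𝓝 (inner ℂ (0 : h.GNS) η + inner ℂ (gnsVec h y) 0)) := by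
    simp only [← hsplit]
    exact ((tendsto_gnsVec_zero (h1b y)).inner hz).add
      (tendsto_const_nhds.inner (tendsto_gnsVec_zero hbz))
  rw [inner_zero_left, zero_add] at hlim
  exact tendsto_nhds_unique (tendsto_const_nhds.inner hz) hlim

/-- The contraction between GNS spaces induced by the identity of the algebra when `f ≤ h`. -/
noncomputable def gnsContraction (hfh : ∀ x, f (star x * x) ≤ h (star x * x)) :
    h.GNS →L[ℂ] f.GNS :=
  ((f.toPreGNS.toLinearMap ∘ₗ h.ofPreGNS.toLinearMap).mkContinuous 1 fun x ↦ by
    rw [one_mul]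
    exact norm_toPreGNS_le_of_map_le (x := h.ofPreGNS x) (y := h.ofPreGNS x) (hfh _)).completion

lemma gnsContraction_gnsVec (hfh : ∀ x, f (star x * x) ≤ h (star x * x)) (x : A) :
    gnsContraction hfh (gnsVec h x) = gnsVec f x :=
  ContinuousLinearMap.completion_apply_coe _ _

/-- The Radon-Nikodym derivative of `f` with respect to `h ≥ f`: the operator `T` on the GNS space
of `h` such that `f (star x * y) = ⟪x, T y⟫`. -/
noncomputable def gnsDensity (hfh : ∀ x, f (star x * x) ≤ h (star x * x)) :
    h.GNS →L[ℂ] h.GNS :=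
  (gnsContraction hfh).adjoint ∘L gnsContraction hfh

lemma inner_gnsDensity_self (hfh : ∀ x, f (star x * x) ≤ h (star x * x)) (η : h.GNS) :
    inner ℂ η (gnsDensity hfh η) = ((‖gnsContraction hfh η‖ ^ 2 : ℝ) : ℂ) := by
  rw [gnsDensity, ContinuousLinearMap.comp_apply, ContinuousLinearMap.adjoint_inner_right,
    inner_self_eq_norm_sq_to_K]
  norm_cast

lemma inner_gnsVec_gnsDensity (hfh : ∀ x, f (star x * x) ≤ h (star x * x)) (x y : A) :
    inner ℂ (gnsVec h x) (gnsDensity hfh (gnsVec h y)) = f (star x * y) := by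
  rw [gnsDensity, ContinuousLinearMap.comp_apply, ContinuousLinearMap.adjoint_inner_right,
    gnsContraction_gnsVec, gnsContraction_gnsVec, inner_gnsVec_gnsVec]

lemma gnsDensity_nonneg (hfh : ∀ x, f (star x * x) ≤ h (star x * x)) : 0 ≤ gnsDensity hfh :=
  (ContinuousLinearMap.nonneg_iff_isPositive _).2 <|
    ContinuousLinearMap.isPositive_adjoint_comp_self _

lemma commute_gnsStarAlgHom_gnsDensity (hfh : ∀ x, f (star x * x) ≤ h (star x * x)) (a : A) :
    Commute (h.gnsStarAlgHom a) (gnsDensity hfh) :=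
  eq_of_forall_inner_gnsVec_apply_eq fun x y ↦ by
    rw [mul_apply_eq_comp, mul_apply_eq_comp, inner_gnsVec_gnsStarAlgHom, gnsStarAlgHom_gnsVec,
      inner_gnsVec_gnsDensity, inner_gnsVec_gnsDensity, star_mul, star_star, mul_assoc]

lemma map_star_mul_self_le_add_right (f g : A →ₚ[ℂ] ℂ) (x : A) :
    f (star x * x) ≤ (f + g) (star x * x) :=
  le_add_of_nonneg_right (map_nonneg g (star_mul_self_nonneg x))

lemma map_star_mul_self_le_add_left (f g : A →ₚ[ℂ] ℂ) (x : A) :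
    g (star x * x) ≤ (f + g) (star x * x) :=
  le_add_of_nonneg_left (map_nonneg f (star_mul_self_nonneg x))

lemma gnsDensity_add_gnsDensity (f g : A →ₚ[ℂ] ℂ) :
    gnsDensity (map_star_mul_self_le_add_right f g) +
      gnsDensity (map_star_mul_self_le_add_left f g) = 1 :=
  eq_of_forall_inner_gnsVec_apply_eq fun x y ↦ by
    rw [add_apply, inner_add_right, inner_gnsVec_gnsDensity, inner_gnsVec_gnsDensity,
      one_apply_eq_self, inner_gnsVec_gnsVec]
    rfl

/-- The functional `x ↦ ⟪1, S x⟫` on the algebra given by an operator `S` on the GNS space of `h`;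
the functionals `≤ h` arise from the operators `0 ≤ S ≤ 1` commuting with the algebra. -/
noncomputable def gnsFunctional (h : A →ₚ[ℂ] ℂ) : (h.GNS →L[ℂ] h.GNS) →ₗ[ℂ] A →ₗ[ℂ] ℂ where
  toFun S := (innerSL ℂ (gnsVec h 1)).toLinearMap ∘ₗ S.toLinearMap ∘ₗ gnsVec h
  map_add' S T := by ext x; simp [inner_add_right]
  map_smul' c S := by ext x; simp [inner_smul_right]

lemma gnsFunctional_star_mul {S : h.GNS →L[ℂ] h.GNS} (hS : ∀ a, Commute (h.gnsStarAlgHom a) S)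
    (x y : A) : gnsFunctional h S (star x * y) = inner ℂ (gnsVec h x) (S (gnsVec h y)) := by
  change inner ℂ (gnsVec h 1) (S (gnsVec h (star x * y))) = _
  rw [← gnsStarAlgHom_gnsVec, ← mul_apply_eq_comp, ← (hS (star x)).eq, mul_apply_eq_comp,
    inner_gnsVec_gnsStarAlgHom, star_star, mul_one]

lemma gnsFunctional_star_mul_self_mono {S T : h.GNS →L[ℂ] h.GNS} (hST : S ≤ T)
    (hS : ∀ a, Commute (h.gnsStarAlgHom a) S) (hT : ∀ a, Commute (h.gnsStarAlgHom a) T) (x : A) :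
    gnsFunctional h S (star x * x) ≤ gnsFunctional h T (star x * x) := by
  rw [← sub_nonneg, gnsFunctional_star_mul hS, gnsFunctional_star_mul hT, ← inner_sub_right,
    ← sub_apply]
  exact ((ContinuousLinearMap.le_def S T).1 hST).inner_nonneg_right _

lemma gnsFunctional_gnsDensity (hfh : ∀ x, f (star x * x) ≤ h (star x * x)) :
    gnsFunctional h (gnsDensity hfh) = f.toLinearMap := by
  ext x
  change inner ℂ (gnsVec h 1) (gnsDensity hfh (gnsVec h x)) = f x
  rw [inner_gnsVec_gnsDensity, star_one, one_mul]

lemma one_sub_gnsDensity (f g : A →ₚ[ℂ] ℂ) :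
    1 - gnsDensity (map_star_mul_self_le_add_right f g) =
      gnsDensity (map_star_mul_self_le_add_left f g) :=
  sub_eq_iff_eq_add'.2 (gnsDensity_add_gnsDensity f g).symm

lemma gnsContraction_eq_zero_of_gnsDensity_apply_eq_self {η : (f + g).GNS}
    (hη : gnsDensity (map_star_mul_self_le_add_right f g) η = η) :
    gnsContraction (map_star_mul_self_le_add_left f g) η = 0 := by
  have hgη : gnsDensity (map_star_mul_self_le_add_left f g) η = 0 := by
    rw [← one_sub_gnsDensity, sub_apply, hη, one_apply_eq_self, sub_self]
  have hnorm := inner_gnsDensity_self (map_star_mul_self_le_add_left f g) η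
  rw [hgη, inner_zero_right, eq_comm, Complex.ofReal_eq_zero] at hnorm
  exact norm_eq_zero.1 (pow_eq_zero_iff two_ne_zero |>.1 hnorm)

lemma gnsDensity_le_one (f g : A →ₚ[ℂ] ℂ) :
    gnsDensity (map_star_mul_self_le_add_right f g) ≤ 1 :=
  sub_nonneg.1 (one_sub_gnsDensity f g ▸ gnsDensity_nonneg _)

/-- The functional with density `T - T ^ (n + 1)` with respect to `f + g`, where `T` is the density
of `f`. These increase to the part of `f` that is absolutely continuous with respect to `g`. -/
noncomputable def absContApprox (f g : A →ₚ[ℂ] ℂ) (n : ℕ) : A →ₗ[ℂ] ℂ :=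
  gnsFunctional (f + g) (gnsDensity (map_star_mul_self_le_add_right f g) -
    gnsDensity (map_star_mul_self_le_add_right f g) ^ (n + 1))

lemma commute_gnsDensity_sub_pow (f g : A →ₚ[ℂ] ℂ) (n : ℕ) (a : A) :
    Commute ((f + g).gnsStarAlgHom a) (gnsDensity (map_star_mul_self_le_add_right f g) -
      gnsDensity (map_star_mul_self_le_add_right f g) ^ n) :=
  (commute_gnsStarAlgHom_gnsDensity _ a).sub_right <|
    (commute_gnsStarAlgHom_gnsDensity _ a).pow_right n

lemma absContApprox_zero (f g : A →ₚ[ℂ] ℂ) : absContApprox f g 0 = 0 := by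
  rw [absContApprox, zero_add, pow_one, sub_self, map_zero]

lemma absContApprox_star_mul_self_mono (f g : A →ₚ[ℂ] ℂ) (x : A) :
    Monotone fun n ↦ absContApprox f g n (star x * x) := fun _ _ hmn ↦
  gnsFunctional_star_mul_self_mono
    (sub_le_sub_left (CStarAlgebra.pow_antitone (gnsDensity_nonneg _) (gnsDensity_le_one f g)
      (Nat.succ_le_succ hmn)) _)
    (commute_gnsDensity_sub_pow f g _) (commute_gnsDensity_sub_pow f g _) x

lemma absContApprox_star_mul_self_le (f g : A →ₚ[ℂ] ℂ) (n : ℕ) (x : A) :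
    absContApprox f g n (star x * x) ≤ n * g (star x * x) := by
  have hle := gnsFunctional_star_mul_self_mono
    (sub_pow_succ_le_smul (gnsDensity_nonneg _) (gnsDensity_le_one f g) n)
    (commute_gnsDensity_sub_pow f g _) (fun a ↦ by
      rw [one_sub_gnsDensity]
      exact (commute_gnsStarAlgHom_gnsDensity _ a).smul_right _) x
  rw [one_sub_gnsDensity, map_smul, gnsFunctional_gnsDensity] at hle
  exact hle

lemma tendsto_absContApprox
    (hfix : ∀ η, gnsDensity (map_star_mul_self_le_add_right f g) η = η → η = 0) (x : A) :
    Tendsto (fun n ↦ absContApprox f g n x) atTop (𝓝 (f x)) := by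
  have hpow := (tendsto_add_atTop_iff_nat 1).2 <|
    tendsto_pow_apply_of_forall_fixed_eq_zero (gnsDensity_nonneg _) (gnsDensity_le_one f g) hfix
      (gnsVec (f + g) x)
  have hlim := (((innerSL ℂ (gnsVec (f + g) 1)).continuous.tendsto 0).comp hpow).const_sub (f x)
  rw [map_zero, sub_zero] at hlim
  refine hlim.congr fun n ↦ ?_
  rw [absContApprox, map_sub, gnsFunctional_gnsDensity]
  rfl

end GNS

section AbsCont

variable {H : Type} [NormedAddCommGroup H] [InnerProductSpace ℂ H] [CompleteSpace H]
  {M : VonNeumannAlgebra H} {f g h : ↥M →ₚ[ℂ] ℂ}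

/- Writing `u z = a` with `u ^ 2 = (1 + z z⋆)⁻¹`, one has `1 - u ^ 2 = a a⋆`, and `u ^ 2` serves as
`b`. -/
lemma exists_isSelfAdjoint_tendsto_toPreGNS_mul (hfin : VNFinite M) (hg : VNIsNormal g.toLinearMap)
    (hgf : ∀ x, g (star x * x) = 0 → x = 0) (hh : VNIsNormal h.toLinearMap) {z : ℕ → ↥M}
    (hz : Tendsto (fun k ↦ ‖g.toPreGNS (z k)‖) atTop (𝓝 0)) :
    ∃ b : ℕ → ↥M, (∀ k, IsSelfAdjoint (b k)) ∧
      (∀ y, Tendsto (fun k ↦ ‖h.toPreGNS ((1 - b k) * y)‖) atTop (𝓝 0)) ∧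
      Tendsto (fun k ↦ ‖h.toPreGNS (b k * z k)‖) atTop (𝓝 0) := by
  choose u hu0 huu huz using fun k ↦ exists_mul_self_eq_one_sub_shrink (z k)
  have hnn (k : ℕ) : 0 ≤ z k * star (z k) := mul_star_self_nonneg _
  have hu1 (k : ℕ) : ‖u k‖ ≤ 1 := norm_le_one_of_star_mul_self_le_one <| by
    rw [(hu0 k).isSelfAdjoint.star_eq, huu]
    exact sub_le_self 1 (shrink_nonneg (hnn k))
  have ha1 (k : ℕ) : ‖star (u k * z k)‖ ≤ 1 := norm_le_one_of_star_mul_self_le_one <| by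
    rw [star_star, huz]; exact shrink_le_one (hnn k)
  have hga : Tendsto (fun k ↦ ‖g.toPreGNS (u k * z k)‖) atTop (𝓝 0) :=
    squeeze_zero (fun _ ↦ norm_nonneg _)
      (fun k ↦ norm_toPreGNS_mul_le_of_norm_le_one (hu1 k) (z k)) hz
  have hgstar : Tendsto (fun k ↦ ‖g.toPreGNS (star (u k * z k))‖) atTop (𝓝 0) :=
    tendsto_toPreGNS_of_tendsto_star hfin hg hgf ha1 (by simpa only [star_star] using hga)
  refine ⟨fun k ↦ u k * u k, fun k ↦ ?_, fun y ↦ ?_, ?_⟩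
  · exact (hu0 k).isSelfAdjoint.commute_iff (hu0 k).isSelfAdjoint |>.1 rfl
  · refine squeeze_zero (fun _ ↦ norm_nonneg _) (fun k ↦ ?_)
      (tendsto_toPreGNS_mul_of_bounded hh hg hgf ha1 hgstar y)
    simp only [huu, sub_sub_cancel, ← huz, mul_assoc]
    exact norm_toPreGNS_mul_le_of_norm_le_one (by simpa only [norm_star] using ha1 k) _
  · refine squeeze_zero (fun _ ↦ norm_nonneg _) (fun k ↦ ?_)
      (tendsto_toPreGNS_mul_of_bounded hh hg hgf (by simpa only [norm_star] using ha1) hga 1)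
    simp only [mul_one, mul_assoc]
    exact norm_toPreGNS_mul_le_of_norm_le_one (hu1 k) _

lemma eq_zero_of_gnsContraction_eq_zero (hfin : VNFinite M) (hg : VNIsNormal g.toLinearMap)
    (hgf : ∀ x, g (star x * x) = 0 → x = 0) (hh : VNIsNormal h.toLinearMap)
    (hgh : ∀ x, g (star x * x) ≤ h (star x * x)) {η : h.GNS} (hη : gnsContraction hgh η = 0) :
    η = 0 := by
  obtain ⟨z, hz⟩ := exists_tendsto_gnsVec η
  have hgz : Tendsto (fun k ↦ ‖g.toPreGNS (z k)‖) atTop (𝓝 0) := by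
    simpa only [Function.comp_def, gnsContraction_gnsVec, hη, norm_zero, norm_gnsVec] using
      (((gnsContraction hgh).continuous.tendsto η).comp hz).norm
  obtain ⟨b, hb, h1b, hbz⟩ := exists_isSelfAdjoint_tendsto_toPreGNS_mul hfin hg hgf hh hgz
  exact eq_zero_of_tendsto_gnsVec_of_tendsto_mul hz hb h1b hbz

theorem absCont_of_finite (hfin : VNFinite M) (hg : VNIsNormal g.toLinearMap)
    (hgf : ∀ x, g (star x * x) = 0 → x = 0) (hf : VNIsNormal f.toLinearMap) :
    VNAbsCont f.toLinearMap g.toLinearMap := by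
  have hpos (n : ℕ) : VNIsPos (absContApprox f g n) := fun x ↦ by
    simpa [absContApprox_zero] using absContApprox_star_mul_self_mono f g x n.zero_le
  have hle (n : ℕ) : VNLE (absContApprox f g n) (((n + 1 : ℝ) : ℂ) • g.toLinearMap) := fun x ↦ by
    refine sub_nonneg.2 <| (absContApprox_star_mul_self_le f g n x).trans <|
      mul_le_mul_of_nonneg_right ?_ (map_nonneg g (star_mul_self_nonneg x))
    exact_mod_cast n.le_succ
  exact ⟨absContApprox f g, fun n ↦ n + 1,
    fun n ↦ ⟨hpos n, isNormal_of_le_smul (f := toPos _ (hpos n)) hg (hle n)⟩,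
    fun n ↦ by positivity,
    fun n x ↦ sub_nonneg.2 (absContApprox_star_mul_self_mono f g x n.le_succ), hle,
    tendsto_absContApprox fun η hη ↦ eq_zero_of_gnsContraction_eq_zero hfin hg hgf
      (isNormal_add hf hg) _ (gnsContraction_eq_zero_of_gnsDensity_apply_eq_self hη)⟩

end AbsCont

section Conjugation

variable {A : Type*} [CStarAlgebra A] [PartialOrder A] [StarOrderedRing A] {f g : A →ₚ[ℂ] ℂ}

/-- The positive functional `x ↦ g (star a * x * a)`. -/
noncomputable def mapConj (g : A →ₚ[ℂ] ℂ) (a : A) : A →ₚ[ℂ] ℂ :=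
  PositiveLinearMap.mk₀
    (g.toLinearMap ∘ₗ LinearMap.mulRight ℂ a ∘ₗ LinearMap.mulLeft ℂ (star a)) fun _ hx ↦
      map_nonneg g (star_left_conjugate_nonneg hx a)

lemma mapConj_apply (a x : A) : mapConj g a x = g (star a * x * a) := rfl

lemma norm_toPreGNS_mapConj (a x : A) :
    ‖(mapConj g a).toPreGNS x‖ = ‖g.toPreGNS (x * a)‖ := by
  have h : mapConj g a (star x * x) = g (star (x * a) * (x * a)) := by
    rw [mapConj_apply, star_mul]
    simp only [mul_assoc]
  exact (norm_toPreGNS_le_of_map_le h.le).antisymm (norm_toPreGNS_le_of_map_le h.ge)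

end Conjugation

section GNSNorm

variable {A : Type*} [CStarAlgebra A] [PartialOrder A] [StarOrderedRing A] {f g : A →ₚ[ℂ] ℂ}

lemma norm_toPreGNS_le_of_map_le_mul {α : ℝ} (hα : 0 ≤ α) {x : A}
    (hfg : f (star x * x) ≤ α * g (star x * x)) :
    ‖f.toPreGNS x‖ ≤ √α * ‖g.toPreGNS x‖ := by
  rw [← sq_le_sq₀ (norm_nonneg _) (by positivity), mul_pow, Real.sq_sqrt hα]
  rw [← norm_toPreGNS_sq, ← norm_toPreGNS_sq] at hfg
  exact_mod_cast hfg

lemma norm_toPreGNS_le_of_tendsto {F : ℕ → A →ₚ[ℂ] ℂ} {x : A} {c : ℝ}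
    (hF : Tendsto (fun j ↦ F j (star x * x)) atTop (𝓝 (f (star x * x))))
    (hc : ∀ j, ‖(F j).toPreGNS x‖ ≤ c) : ‖f.toPreGNS x‖ ≤ c := by
  simp only [← norm_toPreGNS_sq] at hF
  have hsq := (Complex.continuous_re.tendsto _).comp hF
  simp only [Function.comp_def, Complex.ofReal_re] at hsq
  exact (sq_le_sq₀ (norm_nonneg _) ((norm_nonneg _).trans (hc 0))).1 <|
    le_of_tendsto' hsq fun j ↦ pow_le_pow_left₀ (norm_nonneg _) (hc j) 2

lemma norm_toPreGNS_le_of_tendsto_zero {x : ℕ → A} {ε : ℝ} {N m : ℕ}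
    (hfg : ∀ y, f (star y * y) ≤ g (star y * y))
    (hx : Tendsto (fun n ↦ ‖f.toPreGNS (x n)‖) atTop (𝓝 0))
    (hε : ∀ n ≥ N, ‖g.toPreGNS (x m - x n)‖ ≤ ε) : ‖f.toPreGNS (x m)‖ ≤ ε := by
  have hlim := hx.const_add ε
  rw [add_zero] at hlim
  refine ge_of_tendsto hlim <| (eventually_ge_atTop N).mono fun n hn ↦ ?_
  calc ‖f.toPreGNS (x m)‖ = ‖f.toPreGNS (x m - x n) + f.toPreGNS (x n)‖ := by
        rw [← map_add, sub_add_cancel]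
    _ ≤ ‖f.toPreGNS (x m - x n)‖ + ‖f.toPreGNS (x n)‖ := norm_add_le _ _
    _ ≤ ε + ‖f.toPreGNS (x n)‖ := by
        gcongr
        exact (norm_toPreGNS_le_of_map_le (hfg _)).trans (hε n hn)

end GNSNorm

section Isometry

variable {R : Type*} [Ring R] [StarRing R] {v : R}

/-- For an isometry `v`, these are partial isometries from the projection `1 - v * star v` onto
pairwise orthogonal projections. -/
def defectShift (v : R) (n : ℕ) : R := v ^ n * (1 - v * star v)

lemma isStarProjection_one_sub_mul_star (hv : star v * v = 1) :
    IsStarProjection (1 - v * star v) := by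
  refine IsStarProjection.one_sub ⟨?_, .mul_star_self v⟩
  rw [IsIdempotentElem, mul_assoc, ← mul_assoc (star v), hv, one_mul]

lemma star_pow_mul_pow (hv : star v * v = 1) (n : ℕ) : star (v ^ n) * v ^ n = 1 := by
  rw [star_pow, pow_mul_pow_eq_one n hv]

lemma star_defectShift (n : ℕ) :
    star (defectShift v n) = (1 - v * star v) * star (v ^ n) := by
  rw [defectShift, star_mul, star_sub, star_one, star_mul, star_star]

lemma star_defectShift_mul_self (hv : star v * v = 1) (n : ℕ) :
    star (defectShift v n) * defectShift v n = 1 - v * star v := by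
  rw [star_defectShift, defectShift, mul_assoc, ← mul_assoc (star (v ^ n)),
    star_pow_mul_pow hv, one_mul, (isStarProjection_one_sub_mul_star hv).isIdempotentElem]

lemma star_defectShift_mul_of_lt (hv : star v * v = 1) {m n : ℕ} (hmn : m < n) :
    star (defectShift v m) * defectShift v n = 0 := by
  obtain ⟨d, rfl⟩ := Nat.exists_eq_add_of_lt hmn
  have hv0 : (1 - v * star v) * v = 0 := by
    rw [sub_mul, one_mul, mul_assoc, hv, mul_one, sub_self]
  calc star (defectShift v m) * defectShift v (m + d + 1)
      = (1 - v * star v) * (star (v ^ m) * v ^ m) * v * v ^ d * (1 - v * star v) := by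
        rw [star_defectShift, defectShift, add_assoc, pow_add, pow_succ']
        simp only [mul_assoc]
    _ = 0 := by rw [star_pow_mul_pow hv, mul_one, hv0, zero_mul, zero_mul]

lemma star_defectShift_mul_of_ne (hv : star v * v = 1) {m n : ℕ} (hmn : m ≠ n) :
    star (defectShift v m) * defectShift v n = 0 := by
  rcases hmn.lt_or_gt with h | h
  · exact star_defectShift_mul_of_lt hv h
  · simpa using congrArg star (star_defectShift_mul_of_lt hv h)

lemma defectShift_mul_star (hv : star v * v = 1) (n : ℕ) :
    defectShift v n * star (defectShift v n) =
      v ^ n * star (v ^ n) - v ^ (n + 1) * star (v ^ (n + 1)) := by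
  rw [star_defectShift, defectShift, mul_assoc, ← mul_assoc (1 - v * star v),
    (isStarProjection_one_sub_mul_star hv).isIdempotentElem, sub_mul, mul_sub, one_mul, pow_succ,
    star_mul]
  simp only [mul_assoc]

end Isometry

section DefectShift

variable {A : Type*} [CStarAlgebra A]

lemma exists_norm_lt_one_forall_smul_star_mul_eq {w : ℕ → A} {e : A} (hw : ∀ n, ‖w n‖ ≤ 1)
    (horth : ∀ m n, m ≠ n → star (w m) * w n = 0) (hself : ∀ n, star (w n) * w n = e) :
    ∃ y : A, ‖y‖ < 1 ∧ ∀ n, ((4 : ℂ) ^ (n + 1)) • star (w n) * y = e := by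
  have hbound (n : ℕ) : ‖((1 / 4 : ℂ) ^ (n + 1)) • w n‖ ≤ (1 / 4) ^ (n + 1) := by
    rw [norm_smul, norm_pow, norm_div, norm_one, RCLike.norm_ofNat]
    exact mul_le_of_le_one_right (by positivity) (hw n)
  have hgeom : HasSum (fun n : ℕ ↦ (1 / 4 : ℝ) ^ (n + 1)) (1 / 4 * (1 - 1 / 4)⁻¹) := by
    simp only [pow_succ']
    exact (hasSum_geometric_of_lt_one (by norm_num) (by norm_num)).mul_left _
  have hsum := (Summable.of_norm_bounded hgeom.summable hbound).hasSum
  refine ⟨∑' n, ((1 / 4 : ℂ) ^ (n + 1)) • w n,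
    (tsum_of_norm_bounded hgeom hbound).trans_lt (by norm_num), fun n ↦ ?_⟩
  refine (hsum.mul_left (((4 : ℂ) ^ (n + 1)) • star (w n))).unique ?_
  convert hasSum_single n fun m hm ↦ ?_ using 1
  · rw [smul_mul_smul_comm, hself, ← mul_pow]
    norm_num
  · rw [smul_mul_smul_comm, horth n m hm.symm, smul_zero]

variable [PartialOrder A] [StarOrderedRing A] {v : A}

lemma norm_defectShift_le_one (hv : star v * v = 1) (n : ℕ) : ‖defectShift v n‖ ≤ 1 :=
  norm_le_one_of_isStarProjection_star_mul_self <|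
    star_defectShift_mul_self hv n ▸ isStarProjection_one_sub_mul_star hv

lemma tendsto_toPreGNS_star_defectShift (g : A →ₚ[ℂ] ℂ) (hv : star v * v = 1) :
    Tendsto (fun n ↦ ‖g.toPreGNS (star (defectShift v n))‖) atTop (𝓝 0) := by
  have hsq (n : ℕ) : ‖g.toPreGNS (star (defectShift v n))‖ ^ 2 =
      ‖g.toPreGNS (star (v ^ n))‖ ^ 2 - ‖g.toPreGNS (star (v ^ (n + 1)))‖ ^ 2 := by
    rw [← Complex.ofReal_inj, Complex.ofReal_sub, norm_toPreGNS_sq, norm_toPreGNS_sq,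
      norm_toPreGNS_sq, star_star, star_star, star_star, defectShift_mul_star hv, map_sub]
  have hanti : Antitone fun n ↦ ‖g.toPreGNS (star (v ^ n))‖ ^ 2 :=
    antitone_nat_of_succ_le fun n ↦ sub_nonneg.1 ((sq_nonneg _).trans_eq (hsq n))
  have hlim := tendsto_atTop_ciInf hanti ⟨0, by rintro _ ⟨n, rfl⟩; positivity⟩
  have hdiff := (hlim.sub (hlim.comp (tendsto_add_atTop_nat 1))).congr fun n ↦ (hsq n).symm
  rw [sub_self] at hdiff
  simpa using hdiff.sqrt

lemma exists_isUnit_tendsto_toPreGNS_mul_eq_add (g : A →ₚ[ℂ] ℂ) (hv : star v * v = 1) :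
    ∃ (a : A) (x : ℕ → A), IsUnit a ∧ Tendsto (fun n ↦ ‖g.toPreGNS (x n)‖) atTop (𝓝 0) ∧
      ∀ n, x n * a = x n + (1 - v * star v) := by
  obtain ⟨φ, hφ, hsmall⟩ := extraction_forall_of_eventually
    (P := fun n k ↦ ‖g.toPreGNS (star (defectShift v k))‖ ≤ (1 / 8) ^ (n + 1)) fun n ↦
      (tendsto_toPreGNS_star_defectShift g hv).eventually_le_const (by positivity)
  obtain ⟨y, hy, hxy⟩ := exists_norm_lt_one_forall_smul_star_mul_eq
    (fun n ↦ norm_defectShift_le_one hv (φ n))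
    (fun m n hmn ↦ star_defectShift_mul_of_ne hv (hφ.injective.ne hmn))
    (fun n ↦ star_defectShift_mul_self hv (φ n))
  refine ⟨1 + y, fun n ↦ ((4 : ℂ) ^ (n + 1)) • star (defectShift v (φ n)), ?_, ?_, fun n ↦ ?_⟩
  · simpa using isUnit_one_sub_of_norm_lt_one (x := -y) (by rwa [norm_neg])
  · refine squeeze_zero (fun _ ↦ norm_nonneg _) (fun n ↦ ?_) <|
      (tendsto_add_atTop_iff_nat 1).2 <|
        tendsto_pow_atTop_nhds_zero_of_lt_one (r := (1 / 2 : ℝ)) (by norm_num) (by norm_num)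
    calc ‖g.toPreGNS (((4 : ℂ) ^ (n + 1)) • star (defectShift v (φ n)))‖
        = 4 ^ (n + 1) * ‖g.toPreGNS (star (defectShift v (φ n)))‖ := by
          rw [map_smul, norm_smul, norm_pow, RCLike.norm_ofNat]
      _ ≤ 4 ^ (n + 1) * (1 / 8) ^ (n + 1) := by gcongr; exact hsmall n
      _ = (1 / 2) ^ (n + 1) := by rw [← mul_pow]; norm_num
  · rw [mul_add, mul_one, hxy]

end DefectShift

section Converse

variable {H : Type} [NormedAddCommGroup H] [InnerProductSpace ℂ H] [CompleteSpace H]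
  {M : VonNeumannAlgebra H} {f g : ↥M →ₚ[ℂ] ℂ}

lemma isNormal_mapConj (hg : VNIsNormal g.toLinearMap) {a : ↥M} (ha : IsUnit a) :
    VNIsNormal (mapConj g a).toLinearMap := by
  refine isNormal_iff_tendsto.2 fun ι _ _ _ x y h0 hx hy ↦ isNormal_iff_tendsto.1 hg ι
    (fun i ↦ star a * x i * a) (star a * y * a) (fun i ↦ star_left_conjugate_nonneg (h0 i) a)
    (fun i j h ↦ star_left_conjugate_le_conjugate (hx h) a) ⟨?_, fun z hz ↦ ?_⟩
  · rintro _ ⟨i, rfl⟩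
    exact star_left_conjugate_le_conjugate (hy.1 ⟨i, rfl⟩) a
  · obtain ⟨u, rfl⟩ := ha
    obtain ⟨t, rfl⟩ : ∃ t, star (u : ↥M) * t * u = z := by
      refine ⟨star ((u⁻¹ : (↥M)ˣ) : ↥M) * z * (u⁻¹ : (↥M)ˣ), ?_⟩
      rw [mul_assoc, mul_assoc, Units.inv_mul, mul_one, ← mul_assoc, ← star_mul, Units.inv_mul,
        star_one, one_mul]
    refine star_left_conjugate_le_conjugate (hy.2 ?_) _
    rintro _ ⟨i, rfl⟩
    have hi := sub_nonneg.2 (hz ⟨i, rfl⟩)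
    rwa [← sub_mul, ← mul_sub, u.isUnit.star_left_conjugate_nonneg_iff, sub_nonneg] at hi

lemma tendsto_toPreGNS_of_absCont (hfg : VNAbsCont f.toLinearMap g.toLinearMap) {x : ℕ → ↥M}
    (hgx : Tendsto (fun n ↦ ‖g.toPreGNS (x n)‖) atTop (𝓝 0))
    (hfx : CauchySeq fun n ↦ f.toPreGNS (x n)) :
    Tendsto (fun n ↦ ‖f.toPreGNS (x n)‖) atTop (𝓝 0) := by
  obtain ⟨F, α, hF, hα, hmono, hFg, hlim⟩ := hfg
  have hFf (j : ℕ) (y : ↥M) : F j (star y * y) ≤ f (star y * y) :=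
    (monotone_nat_of_le_succ fun i ↦ sub_nonneg.1 (hmono i y)).ge_of_tendsto (hlim _) j
  have hFx (j : ℕ) : Tendsto (fun n ↦ ‖(toPos (F j) (hF j).1).toPreGNS (x n)‖) atTop (𝓝 0) := by
    have := hgx.const_mul √(α j)
    rw [mul_zero] at this
    exact squeeze_zero (fun _ ↦ norm_nonneg _) (fun n ↦
      norm_toPreGNS_le_of_map_le_mul (hα j).le (sub_nonneg.1 (hFg j (x n)))) this
  rw [Metric.tendsto_atTop]
  intro ε hε
  obtain ⟨N, hN⟩ := Metric.cauchySeq_iff.1 hfx (ε / 2) (half_pos hε)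
  refine ⟨N, fun m hm ↦ ?_⟩
  rw [Real.dist_0_eq_abs, abs_norm]
  refine (norm_toPreGNS_le_of_tendsto (F := fun j ↦ toPos (F j) (hF j).1) (hlim _) fun j ↦
    norm_toPreGNS_le_of_tendsto_zero (N := N) (hFf j) (hFx j) fun n hn ↦ ?_).trans_lt
      (half_lt_self hε)
  rw [map_sub, ← dist_eq_norm]
  exact (hN m hm n hn).le

theorem finite_of_forall_absCont (hg : VNIsNormal g.toLinearMap)
    (hgf : ∀ x, g (star x * x) = 0 → x = 0)
    (hall : ∀ f : ↥M →ₚ[ℂ] ℂ, VNIsNormal f.toLinearMap → VNAbsCont f.toLinearMap g.toLinearMap) :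
    VNFinite M := by
  intro v hv
  obtain ⟨a, x, ha, hgx, hxa⟩ := exists_isUnit_tendsto_toPreGNS_mul_eq_add g hv
  have hx0 : Tendsto (fun n ↦ g.toPreGNS (x n)) atTop (𝓝 0) :=
    tendsto_zero_iff_norm_tendsto_zero.2 hgx
  have hcauchy : CauchySeq fun n ↦ (mapConj g a).toPreGNS (x n) := by
    refine cauchySeq_iff_tendsto_dist_atTop_0.2 <|
      (cauchySeq_iff_tendsto_dist_atTop_0.1 hx0.cauchySeq).congr fun n ↦ ?_
    rw [dist_eq_norm, dist_eq_norm, ← map_sub, ← map_sub, norm_toPreGNS_mapConj, sub_mul, hxa, hxa,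
      add_sub_add_right_eq_sub]
  have hlim := tendsto_toPreGNS_of_absCont (hall _ (isNormal_mapConj hg ha)) hgx hcauchy
  simp only [norm_toPreGNS_mapConj, hxa, map_add] at hlim
  have hnorm := tendsto_nhds_unique hlim (hx0.add_const _).norm
  rw [zero_add, eq_comm] at hnorm
  have hzero : 1 - v * star v = 0 := hgf _ <| by rw [← norm_toPreGNS_sq, hnorm]; simp
  exact (sub_eq_zero.1 hzero).symm

end Converse

end Kosaki

/-- **Kosaki's theorem (Theorem 2.9)**: a von Neumann algebra `M` with a faithful normal
positive functional `𝔤` is finite iff every normal positive functional on `M` is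
absolutely continuous with respect to `𝔤`. -/
theorem vN_finite_iff_forall_absCont
    {H : Type} [NormedAddCommGroup H] [InnerProductSpace ℂ H] [CompleteSpace H]
    (M : VonNeumannAlgebra H) (𝔤 : ↥M →ₗ[ℂ] ℂ)
    (h𝔤p : VNIsPos 𝔤) (h𝔤n : VNIsNormal 𝔤)
    (h𝔤faithful : ∀ x : ↥M, 𝔤 (star x * x) = 0 → x = 0) :
    VNFinite M ↔
      ∀ 𝔣 : ↥M →ₗ[ℂ] ℂ, VNIsPos 𝔣 → VNIsNormal 𝔣 → VNAbsCont 𝔣 𝔤 := by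
  constructor
  · intro hfin 𝔣 h𝔣p h𝔣n
    exact Kosaki.absCont_of_finite (f := Kosaki.toPos 𝔣 h𝔣p) (g := Kosaki.toPos 𝔤 h𝔤p)
      hfin h𝔤n h𝔤faithful h𝔣n
  · intro hall
    exact Kosaki.finite_of_forall_absCont (g := Kosaki.toPos 𝔤 h𝔤p) h𝔤n h𝔤faithful fun 𝔣 h𝔣n ↦
      hall 𝔣.toLinearMap (Kosaki.isPos_toLinearMap 𝔣) h𝔣n
end
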